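/- Let F : ℝ² × ℝ⁹ → ℝ be given by F(x,y,λ) = x⁴ − y⁴ + λ₁ + λ₂x + λ₃y + λ₄x² + λ₅xy + λ₆y² + λ₇x²y + λ₈xy² + λ₉x²y². Then there exists ε₀ > 0 such that for every ε with 0 < ε ≤ ε₀ there exists δ > 0 with the following property: writing Σ = {λ ∈ ℝ⁹ : ‖λ‖ < δ and there exists p ∈ ℝ² with ‖p‖ ≤ ε, F(p,λ) = 0 and the gradient of F(·,λ) vanishes at p}, there exist 14 points of the set {λ ∈ ℝ⁹ : ‖λ‖ < δ} \ Σ lying pairwise in distinct connected components of this set (i.e. the complement of the local discriminant has at least 14 connected components). -/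

import Mathlib

/-!
For small parameters the curve `F = 0` can only be singular near the origin, so the local
discriminant is the set of small `l` such that `F (·, l)` has a singular zero anywhere in the
plane (`good_of_not_disc`). Outside it, one step of the descent along the gradient, made tangent
to the lines `y = ±2`, pushes the negative regions `{F < 0, |y| ≤ 2}` of all nearby parameters
into each other within their components (`transfer`). Hence the following data are constant on
connected sets of parameters outside the discriminant.

* Whether the negative region joins top and bottom of the strip (`Through`).
* The number of bounded negative components, that is, of those not reaching `|y| = 2` (`Count`).
* If there are three bounded components: the orientation of the triangle spanned by one point in
  each of them, ordered by `x` (`Turn`). It is well defined since a line meeting three of them, or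
  a vertical line meeting two of them, would give a quartic polynomial with an impossible sign
  pattern (`no_three`, `x_ne`).
* If the negative region joins top and bottom and there is exactly one bounded component: whether
  it lies to the right or to the left of the unbounded one (`East`).

The map `sig`, induced by `F (x, y) ↦ -F (y, x)`, is an involution of the parameter space that
preserves the discriminant and exchanges the two sign classes of the plane, so all these invariants
may also be applied to the positive region.

Seven kinds of parameters have a negative region not joining top and bottom. The functions
`x⁴ - y⁴ + 1`, `x⁴ - (y² - 1)² + 1/2`, `(x² - 1)² - (y² - 1)² + 1/2` have 0, 1, 2 bounded negative
components. A perturbation `l3` of `(x² - 2y - 5/4)² - (y² - 1/4)²` has three, and its reflection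
in `y` has the other orientation. Finally `l4` has no bounded negative component, but one bounded
positive component beside the unbounded one, and its reflection has it on the other side. The
quasihomogeneous dilations make the parameters arbitrarily small (`Base.sample`). Together with
their images under `sig`, whose negative region joins top and bottom, they lie in 14 different
components (`point_inj`).
-/

/-- The standard versal deformation of the `X₉¹` singularity `x⁴ − y⁴`. -/
noncomputable def X91Def (p : EuclideanSpace ℝ (Fin 2)) (l : EuclideanSpace ℝ (Fin 9)) : ℝ :=
  (p 0) ^ 4 - (p 1) ^ 4 + l 0 + l 1 * p 0 + l 2 * p 1 + l 3 * (p 0) ^ 2 + l 4 * (p 0 * p 1) + l 5 * (p 1) ^ 2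
    + l 6 * ((p 0) ^ 2 * p 1) + l 7 * (p 0 * (p 1) ^ 2) + l 8 * ((p 0) ^ 2 * (p 1) ^ 2)

/-- The local discriminant: parameters `l` with `‖l‖ < δ` such that the corresponding
function has a real critical point `p` with `‖p‖ ≤ ε` and critical value `0`. -/
noncomputable def X91Disc (ε δ : ℝ) : Set (EuclideanSpace ℝ (Fin 9)) :=
  {l | ‖l‖ < δ ∧ ∃ p : EuclideanSpace ℝ (Fin 2), ‖p‖ ≤ ε ∧ X91Def p l = 0 ∧
    fderiv ℝ (fun q => X91Def q l) p = 0}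

namespace X91

open Set Filter Topology

/-! ### Joining points inside planar sets -/

/-- A continuous function without zeros on the path component of `a` keeps its sign there. -/
lemma joined_pos {X : Set (ℝ × ℝ)} {a b : ℝ × ℝ} (h : JoinedIn X a b) {g : ℝ × ℝ → ℝ}
    (hg : Continuous g) (h0 : ∀ z, JoinedIn X a z → g z ≠ 0) (ha : 0 < g a) : 0 < g b := by
  by_contra hb
  push Not at hb
  have hc : IsPreconnected (pathComponentIn X a) :=
    (isPathConnected_pathComponentIn h.source_mem).isConnected.isPreconnected
  obtain ⟨z, hz, hz0⟩ := hc.intermediate_value (a := b) (b := a) h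
    (mem_pathComponentIn_self h.source_mem) hg.continuousOn ⟨hb, ha.le⟩
  exact h0 z hz hz0

lemma joined_curve {X : Set (ℝ × ℝ)} {γ : ℝ → ℝ × ℝ} (hγ : Continuous γ) {a b : ℝ}
    (h : ∀ z ∈ uIcc a b, γ z ∈ X) : JoinedIn X (γ a) (γ b) := by
  refine JoinedIn.ofLine (f := fun t => γ (a + t * (b - a))) (by fun_prop) (by simp) (by simp) ?_
  rintro _ ⟨t, ⟨ht0, ht1⟩, rfl⟩
  apply h
  rw [← segment_eq_uIcc]
  exact ⟨1 - t, t, by linarith, ht0, by ring, by simp only [smul_eq_mul]; ring⟩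

lemma joined_x {X : Set (ℝ × ℝ)} {a b y : ℝ} (h : ∀ z ∈ uIcc a b, (z, y) ∈ X) :
    JoinedIn X (a, y) (b, y) :=
  joined_curve (γ := fun z => (z, y)) (by fun_prop) h

lemma joined_y {X : Set (ℝ × ℝ)} {a b x : ℝ} (h : ∀ z ∈ uIcc a b, (x, z) ∈ X) :
    JoinedIn X (x, a) (x, b) :=
  joined_curve (γ := fun z => (x, z)) (by fun_prop) h

lemma joined_map {X Y : Set (ℝ × ℝ)} {φ : ℝ × ℝ → ℝ × ℝ} (hφ : Continuous φ)
    (h : ∀ p ∈ X, φ p ∈ Y) {a b : ℝ × ℝ} (hab : JoinedIn X a b) : JoinedIn Y (φ a) (φ b) :=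
  (hab.map hφ).mono (by rintro _ ⟨p, hp, rfl⟩; exact h p hp)

/-- Constancy on preconnected sets of a property that is locally constant. -/
lemma const_of_local {α : Type*} [TopologicalSpace α] {T : Set α} (hT : IsPreconnected T)
    {Q : α → Prop} (h : ∀ l ∈ T, ∀ᶠ m in 𝓝[T] l, (Q l ↔ Q m)) {a b : α} (ha : a ∈ T)
    (hb : b ∈ T) (hQ : Q a) : Q b :=
  (hT.induction₂' (fun l m => (Q l ↔ Q m))
    (fun l hl => (h l hl).mono fun _ hm => ⟨hm, hm.symm⟩)
    (fun _ _ _ _ _ _ h1 h2 => h1.trans h2) ha hb).1 hQ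

/-! ### Sign patterns of quartic polynomials -/

/-- The fourth divided difference of a quartic is its leading coefficient, so values with
alternating signs at five successive points determine the sign of that coefficient. -/
lemma quartic_neg {c0 c1 c2 c3 c4 t0 t1 t2 t3 t4 : ℝ} {P : ℝ → ℝ}
    (hP : ∀ t, P t = c0 + c1 * t + c2 * t ^ 2 + c3 * t ^ 3 + c4 * t ^ 4)
    (h01 : t0 < t1) (h12 : t1 < t2) (h23 : t2 < t3) (h34 : t3 < t4)
    (s0 : P t0 ≤ 0) (s1 : 0 ≤ P t1) (s2 : P t2 ≤ 0) (s3 : 0 ≤ P t3) (s4 : P t4 ≤ 0)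
    (hs : P t2 < 0 ∨ 0 < P t1) : c4 < 0 := by
  have e : c4 * ((t1 - t0) * (t2 - t0) * (t3 - t0) * (t4 - t0) * (t2 - t1) * (t3 - t1) *
        (t4 - t1) * (t3 - t2) * (t4 - t2) * (t4 - t3)) =
      P t0 * ((t2 - t1) * (t3 - t1) * (t4 - t1) * (t3 - t2) * (t4 - t2) * (t4 - t3))
      - P t1 * ((t2 - t0) * (t3 - t0) * (t4 - t0) * (t3 - t2) * (t4 - t2) * (t4 - t3))
      + P t2 * ((t1 - t0) * (t3 - t0) * (t4 - t0) * (t3 - t1) * (t4 - t1) * (t4 - t3))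
      - P t3 * ((t1 - t0) * (t2 - t0) * (t4 - t0) * (t2 - t1) * (t4 - t1) * (t4 - t2))
      + P t4 * ((t1 - t0) * (t2 - t0) * (t3 - t0) * (t2 - t1) * (t3 - t1) * (t3 - t2)) := by
    simp only [hP]; ring
  have d01 := sub_pos.2 h01
  have d12 := sub_pos.2 h12
  have d23 := sub_pos.2 h23
  have d34 := sub_pos.2 h34
  have d02 : 0 < t2 - t0 := by linarith
  have d03 : 0 < t3 - t0 := by linarith
  have d04 : 0 < t4 - t0 := by linarith
  have d13 : 0 < t3 - t1 := by linarith
  have d14 : 0 < t4 - t1 := by linarith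
  have d24 : 0 < t4 - t2 := by linarith
  have p0 : 0 < (t2 - t1) * (t3 - t1) * (t4 - t1) * (t3 - t2) * (t4 - t2) * (t4 - t3) := by
    positivity
  have p1 : 0 < (t2 - t0) * (t3 - t0) * (t4 - t0) * (t3 - t2) * (t4 - t2) * (t4 - t3) := by
    positivity
  have p2 : 0 < (t1 - t0) * (t3 - t0) * (t4 - t0) * (t3 - t1) * (t4 - t1) * (t4 - t3) := by
    positivity
  have p3 : 0 < (t1 - t0) * (t2 - t0) * (t4 - t0) * (t2 - t1) * (t4 - t1) * (t4 - t2) := by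
    positivity
  have p4 : 0 < (t1 - t0) * (t2 - t0) * (t3 - t0) * (t2 - t1) * (t3 - t1) * (t3 - t2) := by
    positivity
  have pV : 0 < (t1 - t0) * (t2 - t0) * (t3 - t0) * (t4 - t0) * (t2 - t1) * (t3 - t1) *
        (t4 - t1) * (t3 - t2) * (t4 - t2) * (t4 - t3) := by positivity
  have m0 := mul_nonpos_of_nonpos_of_nonneg s0 p0.le
  have m1 := mul_nonneg s1 p1.le
  have m2 := mul_nonpos_of_nonpos_of_nonneg s2 p2.le
  have m3 := mul_nonneg s3 p3.le
  have m4 := mul_nonpos_of_nonpos_of_nonneg s4 p4.le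
  refine neg_of_mul_neg_left ?_ pV.le
  rw [e]
  rcases hs with hs | hs
  · have := mul_neg_of_neg_of_pos hs p2
    linarith
  · have := mul_pos hs p1
    linarith

lemma quartic_pos {c0 c1 c2 c3 c4 t0 t1 t2 t3 t4 : ℝ} {P : ℝ → ℝ}
    (hP : ∀ t, P t = c0 + c1 * t + c2 * t ^ 2 + c3 * t ^ 3 + c4 * t ^ 4)
    (h01 : t0 < t1) (h12 : t1 < t2) (h23 : t2 < t3) (h34 : t3 < t4)
    (s0 : 0 ≤ P t0) (s1 : P t1 < 0) (s2 : 0 ≤ P t2) (s3 : P t3 < 0) (s4 : 0 ≤ P t4) :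
    0 < c4 := by
  have := quartic_neg (P := fun t => - P t) (c0 := -c0) (c1 := -c1) (c2 := -c2) (c3 := -c3)
    (c4 := -c4) (fun t => by rw [hP]; ring) h01 h12 h23 h34 (by simpa) (by simpa using s1.le)
    (by simpa) (by simpa using s3.le) (by simpa) (Or.inr (by simpa using s1))
  linarith

/-! ### The deformation in coordinates -/

/-- The parameter space of the deformation. -/
abbrev Par := EuclideanSpace ℝ (Fin 9)

/-- The deformation `X91Def` as a function of two real coordinates. -/
def f (l : Par) (x y : ℝ) : ℝ :=
  x ^ 4 - y ^ 4 + l 0 + l 1 * x + l 2 * y + l 3 * x ^ 2 + l 4 * (x * y) + l 5 * y ^ 2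
    + l 6 * (x ^ 2 * y) + l 7 * (x * y ^ 2) + l 8 * (x ^ 2 * y ^ 2)

/-- The partial derivative of `f l` in `x`. -/
def fx (l : Par) (x y : ℝ) : ℝ :=
  4 * x ^ 3 + l 1 + 2 * l 3 * x + l 4 * y + 2 * l 6 * (x * y) + l 7 * y ^ 2
    + 2 * l 8 * (x * y ^ 2)

/-- The partial derivative of `f l` in `y`. -/
def fy (l : Par) (x y : ℝ) : ℝ :=
  -4 * y ^ 3 + l 2 + l 4 * x + 2 * l 5 * y + l 6 * x ^ 2 + 2 * l 7 * (x * y)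
    + 2 * l 8 * (x ^ 2 * y)

/-- Parameters of norm less than `1/100` outside the global discriminant: the curve `f l = 0` has
no singular point in the plane. -/
def Good (l : Par) : Prop :=
  ‖l‖ < 1 / 100 ∧ ∀ x y, ¬ (f l x y = 0 ∧ fx l x y = 0 ∧ fy l x y = 0)

lemma cont_f {α : Type*} [TopologicalSpace α] {l : α → Par} {x y : α → ℝ}
    (hl : Continuous l) (hx : Continuous x) (hy : Continuous y) :
    Continuous fun a => f (l a) (x a) (y a) := by
  unfold f; fun_prop

lemma cont_fx {α : Type*} [TopologicalSpace α] {l : α → Par} {x y : α → ℝ}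
    (hl : Continuous l) (hx : Continuous x) (hy : Continuous y) :
    Continuous fun a => fx (l a) (x a) (y a) := by
  unfold fx; fun_prop

lemma cont_fy {α : Type*} [TopologicalSpace α] {l : α → Par} {x y : α → ℝ}
    (hl : Continuous l) (hx : Continuous x) (hy : Continuous y) :
    Continuous fun a => fy (l a) (x a) (y a) := by
  unfold fy; fun_prop

lemma hasDerivAt_f_line (l : Par) (x y u v s : ℝ) :
    HasDerivAt (fun s => f l (x + s * u) (y + s * v))
      (fx l (x + s * u) (y + s * v) * u + fy l (x + s * u) (y + s * v) * v) s := by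
  have hx : HasDerivAt (fun s => x + s * u) u s := by
    simpa using ((hasDerivAt_id s).mul_const u).const_add x
  have hy : HasDerivAt (fun s => y + s * v) v s := by
    simpa using ((hasDerivAt_id s).mul_const v).const_add y
  unfold f fx fy
  refine HasDerivAt.congr_deriv (((((((((((hx.pow 4).sub (hy.pow 4)).add_const (l 0)).add (hx.const_mul (l 1))).add
    (hy.const_mul (l 2))).add ((hx.pow 2).const_mul (l 3))).add
    ((hx.mul hy).const_mul (l 4))).add ((hy.pow 2).const_mul (l 5))).add
    (((hx.pow 2).mul hy).const_mul (l 6))).add ((hx.mul (hy.pow 2)).const_mul (l 7))).add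
    (((hx.pow 2).mul (hy.pow 2)).const_mul (l 8))) ?_
  simp
  ring

lemma hasFDerivAt_X91Def (l : Par) (p : EuclideanSpace ℝ (Fin 2)) :
    HasFDerivAt (fun q => X91Def q l)
      (fx l (p 0) (p 1) • EuclideanSpace.proj (𝕜 := ℝ) (0 : Fin 2) +
        fy l (p 0) (p 1) • EuclideanSpace.proj (𝕜 := ℝ) (1 : Fin 2)) p := by
  have hx : HasFDerivAt (fun q : EuclideanSpace ℝ (Fin 2) => q 0)
      (EuclideanSpace.proj (𝕜 := ℝ) (0 : Fin 2) : EuclideanSpace ℝ (Fin 2) →L[ℝ] ℝ) p :=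
    (EuclideanSpace.proj (𝕜 := ℝ) (0 : Fin 2)).hasFDerivAt
  have hy : HasFDerivAt (fun q : EuclideanSpace ℝ (Fin 2) => q 1)
      (EuclideanSpace.proj (𝕜 := ℝ) (1 : Fin 2) : EuclideanSpace ℝ (Fin 2) →L[ℝ] ℝ) p :=
    (EuclideanSpace.proj (𝕜 := ℝ) (1 : Fin 2)).hasFDerivAt
  unfold X91Def
  refine HasFDerivAt.congr_fderiv (((((((((((hx.pow 4).sub (hy.pow 4)).add_const (l 0)).add (hx.const_mul (l 1))).add
    (hy.const_mul (l 2))).add ((hx.pow 2).const_mul (l 3))).add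
    ((hx.mul hy).const_mul (l 4))).add ((hy.pow 2).const_mul (l 5))).add
    (((hx.pow 2).mul hy).const_mul (l 6))).add ((hx.mul (hy.pow 2)).const_mul (l 7))).add
    (((hx.pow 2).mul (hy.pow 2)).const_mul (l 8))) ?_
  ext v
  simp [fx, fy]
  ring

lemma fderiv_eq_zero_iff (l : Par) (p : EuclideanSpace ℝ (Fin 2)) :
    fderiv ℝ (fun q => X91Def q l) p = 0 ↔ fx l (p 0) (p 1) = 0 ∧ fy l (p 0) (p 1) = 0 := by
  rw [(hasFDerivAt_X91Def l p).fderiv]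
  constructor
  · intro h
    have h0 := congrArg (fun L => L (EuclideanSpace.single 0 1)) h
    have h1 := congrArg (fun L => L (EuclideanSpace.single 1 1)) h
    simpa using And.intro h0 h1
  · rintro ⟨h0, h1⟩
    simp [h0, h1]

/-! ### Bounds for small parameters -/

lemma abs_coord_le {l : Par} {d : ℝ} (h : ‖l‖ < d) (i : Fin 9) : |l i| ≤ d :=
  (PiLp.norm_apply_le l i).trans h.le

/-- A bound for one monomial of a deformation with small parameters. -/
lemma mono_le {a d m B : ℝ} (h : |a| ≤ d) (hm : |m| ≤ B) : |a * m| ≤ d * B := by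
  rw [abs_mul]
  exact mul_le_mul h hm (abs_nonneg _) ((abs_nonneg _).trans h)

lemma grad_x_ne {l : Par} {e d x y : ℝ} (he : 0 < e) (he1 : e ≤ 1) (hd : d ≤ e ^ 3 / 100)
    (hl : ‖l‖ < d) (hx : e / 2 ≤ |x|) (hyx : |y| ≤ |x|) : fx l x y ≠ 0 := by
  intro h
  set m := |x| with hm
  have hm0 : 0 < m := by linarith
  have b1 := mono_le (m := 1) (abs_coord_le hl 1) (B := 1) (by simp)
  have b3 := mono_le (m := 2 * x) (abs_coord_le hl 3) (B := 2 * m) (by rw [abs_mul]; simp [hm])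
  have b4 := mono_le (abs_coord_le hl 4) hyx
  have b6 := mono_le (m := 2 * (x * y)) (abs_coord_le hl 6) (B := 2 * (m * m))
    (by rw [abs_mul, abs_mul, ← hm]; simp; gcongr)
  have b7 := mono_le (m := y ^ 2) (abs_coord_le hl 7) (B := m ^ 2) (by rw [abs_pow]; gcongr)
  have b8 := mono_le (m := 2 * (x * y ^ 2)) (abs_coord_le hl 8) (B := 2 * (m * m ^ 2))
    (by rw [abs_mul, abs_mul, ← hm, abs_pow, abs_two]; gcongr)
  have e0 : |4 * x ^ 3| = 4 * m ^ 3 := by rw [abs_mul, abs_pow]; simp [hm]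
  have d0 : 0 < d := (norm_nonneg l).trans_lt hl
  have key : 4 * m ^ 3 ≤ d * (1 + 3 * m + 3 * m ^ 2 + 2 * m ^ 3) := by
    rw [← e0]
    have h' : 4 * x ^ 3 = -(l 1 * 1 + l 3 * (2 * x) + l 4 * y + l 6 * (2 * (x * y)) + l 7 * y ^ 2
      + l 8 * (2 * (x * y ^ 2))) := by unfold fx at h; linarith
    rw [h', abs_neg]
    rw [abs_le] at b1 b3 b4 b6 b7 b8 ⊢
    constructor <;> nlinarith
  have e3 : e ^ 3 ≤ 8 * m ^ 3 := by
    have : e ^ 3 ≤ (2 * m) ^ 3 := by gcongr; linarith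
    linarith [mul_pow 2 m 3]
  have e1 : e ^ 3 ≤ 1 := pow_le_one₀ he.le he1
  have m3 : 0 < m ^ 3 := by positivity
  rcases le_total m 1 with h1 | h1
  · have h2 : m ^ 2 ≤ 1 := pow_le_one₀ hm0.le h1
    have h3 : m ^ 3 ≤ 1 := pow_le_one₀ hm0.le h1
    nlinarith
  · have h2 : 1 ≤ m ^ 3 := one_le_pow₀ h1
    have h3 : m ≤ m ^ 3 := le_self_pow₀ h1 (by norm_num)
    have h4 : m ^ 2 ≤ m ^ 3 := pow_le_pow_right₀ h1 (by norm_num)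
    nlinarith

/-- The symmetry of the parameter space given by `f (σ l) x y = - f l y x`. -/
def sig (l : Par) : Par :=
  !₂[-l 0, -l 2, -l 1, -l 5, -l 4, -l 3, -l 7, -l 6, -l 8]

lemma f_sig (l : Par) (x y : ℝ) : f (sig l) x y = - f l y x := by
  simp [f, sig]; ring

lemma fx_sig (l : Par) (x y : ℝ) : fx (sig l) x y = - fy l y x := by
  simp [fx, fy, sig]; ring

lemma fy_sig (l : Par) (x y : ℝ) : fy (sig l) x y = - fx l y x := by
  simp [fx, fy, sig]; ring

lemma norm_sig (l : Par) : ‖sig l‖ = ‖l‖ := by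
  simp [EuclideanSpace.norm_eq, sig, Fin.sum_univ_succ]
  congr 1; ring

lemma sig_sig (l : Par) : sig (sig l) = l := by
  ext i; fin_cases i <;> simp [sig]

lemma continuous_sig : Continuous sig := by
  unfold sig
  refine (PiLp.continuous_toLp 2 _).comp (continuous_pi fun i => ?_)
  fin_cases i <;> simp <;> fun_prop

lemma Good.sig {l : Par} (h : Good l) : Good (sig l) := by
  refine ⟨by rw [norm_sig]; exact h.1, fun x y ⟨h0, h1, h2⟩ => h.2 y x ⟨?_, ?_, ?_⟩⟩
  · rw [f_sig] at h0; linarith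
  · rw [fy_sig] at h2; linarith
  · rw [fx_sig] at h1; linarith

lemma grad_y_ne {l : Par} {e d x y : ℝ} (he : 0 < e) (he1 : e ≤ 1) (hd : d ≤ e ^ 3 / 100)
    (hl : ‖l‖ < d) (hy : e / 2 ≤ |y|) (hyx : |x| ≤ |y|) : fy l x y ≠ 0 := by
  have := grad_x_ne (l := X91.sig l) he he1 hd (by rwa [norm_sig]) hy hyx
  rw [fx_sig] at this
  simpa using this

/-- For small parameters the discriminant of the restriction to the `e`-disc is global. -/
lemma good_of_not_disc {l : Par} {e d : ℝ} (he : 0 < e) (he1 : e ≤ 1) (hd : d ≤ e ^ 3 / 100)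
    (hl : ‖l‖ < d) (h : l ∉ X91Disc e d) : Good l := by
  have e1 : e ^ 3 ≤ 1 := pow_le_one₀ he.le he1
  refine ⟨by linarith, fun x y ⟨h0, h1, h2⟩ => ?_⟩
  have hx : ¬ (e / 2 ≤ |x| ∧ |y| ≤ |x|) := fun hx => grad_x_ne he he1 hd hl hx.1 hx.2 h1
  have hy : ¬ (e / 2 ≤ |y| ∧ |x| ≤ |y|) := fun hx => grad_y_ne he he1 hd hl hx.1 hx.2 h2
  have hx' : |x| < e / 2 ∧ |y| < e / 2 := by
    constructor <;> by_contra hc <;> push Not at hc <;> rcases le_total |x| |y| with h' | h' <;>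
      grind
  refine h ⟨hl, !₂[x, y], ?_, by simpa [X91Def, f] using h0, ?_⟩
  · rw [EuclideanSpace.norm_eq, Real.sqrt_le_left he.le]
    simp only [Fin.sum_univ_two, Real.norm_eq_abs]
    simp
    nlinarith [sq_abs x, sq_abs y, abs_nonneg x, abs_nonneg y]
  · rw [fderiv_eq_zero_iff]
    simpa using ⟨h1, h2⟩

lemma not_disc_of_good {l : Par} {e d : ℝ} (h : Good l) : l ∉ X91Disc e d := by
  rintro ⟨-, p, -, h0, h1⟩
  rw [fderiv_eq_zero_iff] at h1
  exact h.2 (p 0) (p 1) ⟨by simpa [X91Def, f] using h0, h1⟩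

/-- In the strip `|y| ≤ 2` a small deformation is positive far from the origin. -/
lemma f_pos_far {l : Par} (hl : ‖l‖ < 1 / 100) {x y : ℝ} (hy : |y| ≤ 2) (hx : 3 ≤ |x|) :
    0 < f l x y := by
  set m := |x| with hm
  have b0 := mono_le (m := 1) (abs_coord_le hl 0) (B := 1) (by simp)
  have b1 := mono_le (m := x) (abs_coord_le hl 1) (B := m) (by simp [hm])
  have b2 := mono_le (abs_coord_le hl 2) hy
  have b3 := mono_le (m := x ^ 2) (abs_coord_le hl 3) (B := m ^ 2) (by rw [abs_pow])
  have b4 := mono_le (m := x * y) (abs_coord_le hl 4) (B := m * 2) (by rw [abs_mul]; gcongr)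
  have b5 := mono_le (m := y ^ 2) (abs_coord_le hl 5) (B := 2 ^ 2) (by rw [abs_pow]; gcongr)
  have b6 := mono_le (m := x ^ 2 * y) (abs_coord_le hl 6) (B := m ^ 2 * 2)
    (by rw [abs_mul, abs_pow]; gcongr)
  have b7 := mono_le (m := x * y ^ 2) (abs_coord_le hl 7) (B := m * 2 ^ 2)
    (by rw [abs_mul, abs_pow]; gcongr)
  have b8 := mono_le (m := x ^ 2 * y ^ 2) (abs_coord_le hl 8) (B := m ^ 2 * 2 ^ 2)
    (by rw [abs_mul, abs_pow, abs_pow]; gcongr)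
  have hx4 : x ^ 4 = m ^ 4 := by rw [hm, ← abs_pow, abs_of_nonneg (by positivity)]
  have hy4 : y ^ 4 ≤ 2 ^ 4 := by
    rw [← abs_of_nonneg (by positivity : 0 ≤ y ^ 4), abs_pow]; gcongr
  have h2 : 9 ≤ m ^ 2 := by nlinarith
  have h4 : m ^ 4 ≥ 9 * m ^ 2 := by nlinarith
  have h3 : m ^ 2 ≥ 3 * m := by nlinarith
  unfold f
  rw [abs_le] at b0 b1 b2 b3 b4 b5 b6 b7 b8
  rw [hx4]
  linarith

lemma f_neg_poles {l : Par} (hl : ‖l‖ < 1 / 100) {y : ℝ} (hy : |y| = 2) : f l 0 y < 0 := by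
  have hy' := hy.le
  have b0 := mono_le (m := 1) (abs_coord_le hl 0) (B := 1) (by simp)
  have b2 := mono_le (abs_coord_le hl 2) hy.le
  have b5 := mono_le (m := y ^ 2) (abs_coord_le hl 5) (B := 2 ^ 2) (by rw [abs_pow]; gcongr)
  have hy4 : y ^ 4 = 2 ^ 4 := by
    rw [← abs_of_nonneg (by positivity : 0 ≤ y ^ 4), abs_pow, hy]
  unfold f
  rw [abs_le] at b0 b2 b5
  norm_num
  linarith

/-- The curve crosses the horizontal lines `|y| = 2` transversally. -/
lemma fx_ne_edge {l : Par} (hl : ‖l‖ < 1 / 100) {x y : ℝ} (hy : |y| = 2) (h0 : f l x y = 0) :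
    fx l x y ≠ 0 := by
  intro h1
  have hx : |x| < 3 := by
    by_contra hx
    exact (f_pos_far hl hy.le (not_lt.1 hx)).ne' h0
  have hx := hx.le
  have hy' := hy.le
  have b0 := mono_le (m := 1) (abs_coord_le hl 0) (B := 1) (by simp)
  have b1 := mono_le (m := x) (abs_coord_le hl 1) (B := 3) hx
  have b2 := mono_le (abs_coord_le hl 2) hy.le
  have b3 := mono_le (m := x ^ 2) (abs_coord_le hl 3) (B := 3 ^ 2) (by rw [abs_pow]; gcongr)
  have b4 := mono_le (m := x * y) (abs_coord_le hl 4) (B := 3 * 2) (by rw [abs_mul]; gcongr)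
  have b5 := mono_le (m := y ^ 2) (abs_coord_le hl 5) (B := 2 ^ 2) (by rw [abs_pow]; gcongr)
  have b6 := mono_le (m := x ^ 2 * y) (abs_coord_le hl 6) (B := 3 ^ 2 * 2)
    (by rw [abs_mul, abs_pow]; gcongr)
  have b7 := mono_le (m := x * y ^ 2) (abs_coord_le hl 7) (B := 3 * 2 ^ 2)
    (by rw [abs_mul, abs_pow]; gcongr)
  have b8 := mono_le (m := x ^ 2 * y ^ 2) (abs_coord_le hl 8) (B := 3 ^ 2 * 2 ^ 2)
    (by rw [abs_mul, abs_pow, abs_pow]; gcongr)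
  have hy4 : y ^ 4 = 2 ^ 4 := by
    rw [← abs_of_nonneg (by positivity : 0 ≤ y ^ 4), abs_pow, hy]
  have h2 : x * fx l x y = 0 := by rw [h1, mul_zero]
  unfold f at h0
  have h3 : x * fx l x y = 4 * x ^ 4 + l 1 * x + 2 * (l 3 * x ^ 2) + l 4 * (x * y)
    + 2 * (l 6 * (x ^ 2 * y)) + l 7 * (x * y ^ 2) + 2 * (l 8 * (x ^ 2 * y ^ 2)) := by
    unfold fx; ring
  rw [abs_le] at b0 b1 b2 b3 b4 b5 b6 b7 b8
  linarith

/-! ### Negative regions in a strip and their deformation -/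

/-- The part of the strip `|y| ≤ R` where `G` is negative. -/
def neg (R : ℝ) (G : ℝ → ℝ → ℝ) : Set (ℝ × ℝ) := {p | |p.2| ≤ R ∧ G p.1 p.2 < 0}

lemma neg_box {l : Par} (hl : ‖l‖ < 1 / 100) {p : ℝ × ℝ} (hp : p ∈ neg 2 (f l)) :
    p ∈ Icc (-3 : ℝ) 3 ×ˢ Icc (-2 : ℝ) 2 := by
  have h1 : |p.1| < 3 := by
    by_contra hx
    exact (f_pos_far hl hp.1 (not_lt.1 hx)).not_gt hp.2
  exact ⟨abs_le.1 h1.le, abs_le.1 hp.1⟩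

/-- The first order Euler step, of length `s`, along the field `(-∂f/∂x, -(4 - y²) ∂f/∂y)`.
This field is tangent to the lines `|y| = 2` and decreases `f l`. -/
def flow (l : Par) (s : ℝ) (p : ℝ × ℝ) : ℝ × ℝ :=
  (p.1 + s * -fx l p.1 p.2, p.2 + s * (-(4 - p.2 ^ 2) * fy l p.1 p.2))

lemma continuous_flow (l : Par) : Continuous fun q : ℝ × (ℝ × ℝ) => flow l q.1 q.2 := by
  have h1 := cont_fx (l := fun _ : ℝ × (ℝ × ℝ) => l) (x := fun q => q.2.1) (y := fun q => q.2.2)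
    (by fun_prop) (by fun_prop) (by fun_prop)
  have h2 := cont_fy (l := fun _ : ℝ × (ℝ × ℝ) => l) (x := fun q => q.2.1) (y := fun q => q.2.2)
    (by fun_prop) (by fun_prop) (by fun_prop)
  unfold flow
  fun_prop

/-- The derivative of `f m` along the Euler step for `f l`. -/
def slope (l m : Par) (s : ℝ) (p : ℝ × ℝ) : ℝ :=
  fx m (flow l s p).1 (flow l s p).2 * -fx l p.1 p.2 +
    fy m (flow l s p).1 (flow l s p).2 * (-(4 - p.2 ^ 2) * fy l p.1 p.2)

lemma hasDerivAt_flow (l m : Par) (s : ℝ) (p : ℝ × ℝ) :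
    HasDerivAt (fun s => f m (flow l s p).1 (flow l s p).2) (slope l m s p) s :=
  hasDerivAt_f_line m p.1 p.2 _ _ s

lemma flow_strip {l : Par} {s : ℝ} {p : ℝ × ℝ} (hp : |p.2| ≤ 2)
    (h : |s * fy l p.1 p.2| < 1 / 4) : |(flow l s p).2| ≤ 2 := by
  rw [abs_le] at hp ⊢
  rw [abs_lt] at h
  set a := s * fy l p.1 p.2 with ha
  have e : (flow l s p).2 = p.2 - a * (4 - p.2 ^ 2) := by simp only [flow, ha]; ring
  rw [e]
  constructor
  · nlinarith [mul_nonneg (by linarith : 0 ≤ 2 + p.2)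
      (by nlinarith : 0 ≤ 1 - a * (2 - p.2))]
  · nlinarith [mul_nonneg (by linarith : 0 ≤ 2 - p.2)
      (by nlinarith : 0 ≤ 1 + a * (2 + p.2))]

lemma flow_edge {l : Par} {s : ℝ} {p : ℝ × ℝ} (hp : |p.2| = 2) : |(flow l s p).2| = 2 := by
  have h4 : p.2 ^ 2 = 4 := by rw [← sq_abs, hp]; norm_num
  simp [flow, h4, hp]

/-- Away from the discriminant, near every point of the compact box either the function is
positive, or it is less than `-c` after short Euler steps, or it decreases along them at rate at
least `c`; uniformly in `m` near `l`. -/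
lemma exists_rate {l : Par} (h : Good l) : ∃ c > 0, ∀ᶠ x : ℝ × Par in 𝓝 (0, l),
    ∀ p ∈ Icc (-3 : ℝ) 3 ×ˢ Icc (-2 : ℝ) 2,
      (0 < f x.2 p.1 p.2 ∨ f x.2 (flow l x.1 p).1 (flow l x.1 p).2 < -c ∨ slope l x.2 x.1 p < -c)
      ∧ |x.1 * fy l p.1 p.2| < 1 / 4 := by
  have hK : IsCompact (Icc (-3 : ℝ) 3 ×ˢ Icc (-2 : ℝ) 2) := isCompact_Icc.prod isCompact_Icc
  have cf := cont_f (l := fun _ : ℝ × ℝ => l) (x := fun q => q.1) (y := fun q => q.2)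
    (by fun_prop) (by fun_prop) (by fun_prop)
  have cfx := cont_fx (l := fun _ : ℝ × ℝ => l) (x := fun q => q.1) (y := fun q => q.2)
    (by fun_prop) (by fun_prop) (by fun_prop)
  have cfy := cont_fy (l := fun _ : ℝ × ℝ => l) (x := fun q => q.1) (y := fun q => q.2)
    (by fun_prop) (by fun_prop) (by fun_prop)
  obtain ⟨c, hc, hcK⟩ := hK.exists_forall_le' (a := 0)
    (f := fun p => max |f l p.1 p.2| (fx l p.1 p.2 ^ 2 + (4 - p.2 ^ 2) * fy l p.1 p.2 ^ 2))
    (by fun_prop) (by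
      intro p hp
      have h4 : 0 ≤ 4 - p.2 ^ 2 := by nlinarith [hp.2.1, hp.2.2]
      rcases eq_or_ne (f l p.1 p.2) 0 with h0 | h0
      · refine lt_max_of_lt_right ?_
        rcases eq_or_ne (fx l p.1 p.2) 0 with h1 | h1
        · have h2 : fy l p.1 p.2 ≠ 0 := fun h2 => h.2 _ _ ⟨h0, h1, h2⟩
          have h3 : 4 - p.2 ^ 2 ≠ 0 := by
            intro h3
            refine fx_ne_edge h.1 ?_ h0 h1
            rw [← abs_two, ← sq_eq_sq_iff_abs_eq_abs]
            linarith
          have := h4.lt_of_ne' h3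
          positivity
        · positivity
      · exact lt_max_of_lt_left (by positivity))
  have cfl := continuous_flow l
  have cF : Continuous fun z : (ℝ × Par) × (ℝ × ℝ) =>
      f z.1.2 (flow l z.1.1 z.2).1 (flow l z.1.1 z.2).2 :=
    cont_f (by fun_prop) (continuous_fst.comp (cfl.comp (f := fun z : (ℝ × Par) × (ℝ × ℝ) =>
      (z.1.1, z.2)) (by fun_prop))) (continuous_snd.comp (cfl.comp
      (f := fun z : (ℝ × Par) × (ℝ × ℝ) => (z.1.1, z.2)) (by fun_prop)))
  have cX : Continuous fun z : (ℝ × Par) × (ℝ × ℝ) =>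
      fx z.1.2 (flow l z.1.1 z.2).1 (flow l z.1.1 z.2).2 :=
    cont_fx (by fun_prop) (continuous_fst.comp (cfl.comp (f := fun z : (ℝ × Par) × (ℝ × ℝ) =>
      (z.1.1, z.2)) (by fun_prop))) (continuous_snd.comp (cfl.comp
      (f := fun z : (ℝ × Par) × (ℝ × ℝ) => (z.1.1, z.2)) (by fun_prop)))
  have cY : Continuous fun z : (ℝ × Par) × (ℝ × ℝ) =>
      fy z.1.2 (flow l z.1.1 z.2).1 (flow l z.1.1 z.2).2 :=
    cont_fy (by fun_prop) (continuous_fst.comp (cfl.comp (f := fun z : (ℝ × Par) × (ℝ × ℝ) =>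
      (z.1.1, z.2)) (by fun_prop))) (continuous_snd.comp (cfl.comp
      (f := fun z : (ℝ × Par) × (ℝ × ℝ) => (z.1.1, z.2)) (by fun_prop)))
  have c0 : Continuous fun z : (ℝ × Par) × (ℝ × ℝ) => f z.1.2 z.2.1 z.2.2 :=
    cont_f (by fun_prop) (by fun_prop) (by fun_prop)
  have cx0 : Continuous fun z : (ℝ × Par) × (ℝ × ℝ) => fx l z.2.1 z.2.2 :=
    cont_fx (by fun_prop) (by fun_prop) (by fun_prop)
  have cy0 : Continuous fun z : (ℝ × Par) × (ℝ × ℝ) => fy l z.2.1 z.2.2 :=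
    cont_fy (by fun_prop) (by fun_prop) (by fun_prop)
  have cS : Continuous fun z : (ℝ × Par) × (ℝ × ℝ) => slope l z.1.2 z.1.1 z.2 := by
    unfold slope
    fun_prop
  refine ⟨c / 2, by positivity, hK.eventually_forall_of_forall_eventually fun p hp => ?_⟩
  refine Eventually.and ?_ ?_
  · rcases le_max_iff.1 (hcK p hp) with h1 | h1
    · rcases le_abs.1 h1 with h2 | h2
      · refine mem_of_superset ((isOpen_lt continuous_const c0).mem_nhds ?_) fun z hz => Or.inl hz
        show 0 < f l p.1 p.2
        linarith
      · refine mem_of_superset ((isOpen_lt cF continuous_const).mem_nhds ?_)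
          fun z hz => Or.inr (Or.inl hz)
        show f l (flow l 0 p).1 (flow l 0 p).2 < -(c / 2)
        simp only [flow, zero_mul, add_zero]
        linarith
    · refine mem_of_superset ((isOpen_lt cS continuous_const).mem_nhds ?_)
        fun z hz => Or.inr (Or.inr hz)
      show slope l l 0 p < -(c / 2)
      simp only [slope, flow, zero_mul, add_zero]
      nlinarith
  · exact (isOpen_lt (f := fun z : (ℝ × Par) × (ℝ × ℝ) => |z.1.1 * fy l z.2.1 z.2.2|)
      (by fun_prop) continuous_const).mem_nhds (by simp)

/-- Near a parameter outside the discriminant, a single continuous map deforms every negative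
region into all the neighbouring ones. -/
lemma transfer {l : Par} (h : Good l) : ∃ V ∈ 𝓝 l, ∃ φ : ℝ × ℝ → ℝ × ℝ, Continuous φ ∧
    ∀ m ∈ V, ∀ p ∈ neg 2 (f m), (∀ n ∈ V, φ p ∈ neg 2 (f n)) ∧
      JoinedIn (neg 2 (f m)) p (φ p) ∧ (|p.2| = 2 → |(φ p).2| = 2) := by
  obtain ⟨c, hc, hev⟩ := exists_rate h
  obtain ⟨u, hu, v, hv, huv⟩ := mem_nhds_prod_iff.1 hev
  obtain ⟨r, hr, hru⟩ := Metric.mem_nhds_iff.1 hu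
  set t := min (r / 2) 1 with ht
  have ht0 : 0 < t := by positivity
  have ht1 : t ≤ 1 := min_le_right _ _
  have htr : t < r := (min_le_left _ _).trans_lt (by linarith)
  have hsu : ∀ s, 0 ≤ s → s ≤ t → s ∈ u := fun s h0 h1 => hru (by
    rw [Metric.mem_ball, Real.dist_eq, sub_zero, abs_of_nonneg h0]; linarith)
  have hK : IsCompact (Icc (-3 : ℝ) 3 ×ˢ Icc (-2 : ℝ) 2) := isCompact_Icc.prod isCompact_Icc
  have hφ : Continuous (flow l t) := (continuous_flow l).comp (f := fun p => (t, p)) (by fun_prop)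
  have hw : ∀ᶠ m in 𝓝 l, ∀ p ∈ Icc (-3 : ℝ) 3 ×ˢ Icc (-2 : ℝ) 2,
      |f m (flow l t p).1 (flow l t p).2 - f l (flow l t p).1 (flow l t p).2| < c * t / 2 := by
    refine hK.eventually_forall_of_forall_eventually fun p hp => ?_
    have c1 : Continuous fun z : Par × (ℝ × ℝ) => f z.1 (flow l t z.2).1 (flow l t z.2).2 :=
      cont_f (by fun_prop) (hφ.comp continuous_snd).fst (hφ.comp continuous_snd).snd
    have c2 : Continuous fun z : Par × (ℝ × ℝ) => f l (flow l t z.2).1 (flow l t z.2).2 :=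
      cont_f (by fun_prop) (hφ.comp continuous_snd).fst (hφ.comp continuous_snd).snd
    refine (isOpen_lt (c1.sub c2).abs continuous_const).mem_nhds ?_
    show |f l (flow l t p).1 (flow l t p).2 - f l (flow l t p).1 (flow l t p).2| < c * t / 2
    rw [sub_self, abs_zero]
    positivity
  have hn : ∀ᶠ m : Par in 𝓝 l, ‖m‖ < 1 / 100 :=
    (isOpen_lt continuous_norm continuous_const).mem_nhds h.1
  refine ⟨v ∩ {m | _} ∩ {m | _}, inter_mem (inter_mem hv hw) hn, flow l t, hφ, ?_⟩
  rintro m ⟨⟨hmv, hmw⟩, hm⟩ p hp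
  have hpK := neg_box hm hp
  have main : ∀ s ∈ Icc 0 t, f m (flow l s p).1 (flow l s p).2 ≤ -c * s := by
    intro s hs
    refine image_le_of_deriv_right_lt_deriv_boundary (a := 0) (b := t)
      (f := fun s => f m (flow l s p).1 (flow l s p).2) (f' := fun s => slope l m s p)
      (B := fun s => -c * s) (B' := fun _ => -c)
      (fun s _ => (hasDerivAt_flow l m s p).continuousAt.continuousWithinAt)
      (fun s _ => (hasDerivAt_flow l m s p).hasDerivWithinAt) ?_ ?_ ?_ hs
    · simpa [flow] using hp.2.le
    · intro s
      simpa using (hasDerivAt_id s).const_mul (-c)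
    · intro s hs heq
      rcases (huv (mk_mem_prod (hsu s hs.1 hs.2.le) hmv) p hpK).1 with h1 | h1 | h1
      · exact absurd hp.2 h1.not_gt
      · simp only at h1 heq
        nlinarith [hs.2]
      · exact h1
  have hstrip : ∀ s ∈ Icc 0 t, |(flow l s p).2| ≤ 2 := fun s hs =>
    flow_strip hp.1 (huv (mk_mem_prod (hsu s hs.1 hs.2) hmv) p hpK).2
  have h0 : flow l 0 p = p := by simp [flow]
  refine ⟨fun n hn => ⟨hstrip t ⟨ht0.le, le_rfl⟩, ?_⟩, ?_, flow_edge⟩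
  · have a1 := abs_lt.1 (hmw p hpK)
    have a2 := abs_lt.1 (hn.1.2 p hpK)
    have a3 := main t ⟨ht0.le, le_rfl⟩
    linarith
  · have := joined_curve (X := neg 2 (f m)) (γ := fun s => flow l s p)
      ((continuous_flow l).comp (f := fun s => (s, p)) (by fun_prop)) (a := 0) (b := t) (by
        intro s hs
        rw [uIcc_of_le ht0.le] at hs
        refine ⟨hstrip s hs, ?_⟩
        rcases hs.1.eq_or_lt with h1 | h1
        · simpa only [← h1, h0] using hp.2
        · have := main s hs
          have := mul_pos hc h1
          linarith)
    rwa [h0] at this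

/-! ### Bounded components and invariants of a chamber -/

/-- The path component of `p` in the negative region does not reach the lines `|y| = R`. -/
def Inner (R : ℝ) (G : ℝ → ℝ → ℝ) (p : ℝ × ℝ) : Prop :=
  p ∈ neg R G ∧ ∀ q : ℝ × ℝ, |q.2| = R → ¬ JoinedIn (neg R G) p q

/-- `r` lists one point in each bounded component of the negative region. -/
def Reps (R : ℝ) (G : ℝ → ℝ → ℝ) {k : ℕ} (r : Fin k → ℝ × ℝ) : Prop :=
  (∀ i, Inner R G (r i)) ∧ (∀ i j, JoinedIn (neg R G) (r i) (r j) → i = j) ∧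
    ∀ p, Inner R G p → ∃ i, JoinedIn (neg R G) p (r i)

/-- The negative region has exactly `k` bounded components. -/
def Count (R : ℝ) (G : ℝ → ℝ → ℝ) (k : ℕ) : Prop := ∃ r : Fin k → ℝ × ℝ, Reps R G r

/-- The negative region connects the top and the bottom of the strip. -/
def Through (R : ℝ) (G : ℝ → ℝ → ℝ) : Prop := JoinedIn (neg R G) (0, R) (0, -R)

/-- Twice the signed area of the triangle `a b c`. -/
def orient (a b c : ℝ × ℝ) : ℝ :=
  (b.1 - a.1) * (c.2 - a.2) - (b.2 - a.2) * (c.1 - a.1)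

/-- There are exactly three bounded components, and the triangle which they span, taken from
left to right, is oriented with the sign of `κ`. -/
def Turn (κ R : ℝ) (G : ℝ → ℝ → ℝ) : Prop :=
  ∃ r : Fin 3 → ℝ × ℝ, Reps R G r ∧ (r 0).1 < (r 1).1 ∧ (r 1).1 < (r 2).1 ∧
    0 < κ * orient (r 0) (r 1) (r 2)

/-- On the horizontal line through `a`, the component of `(0, R)` contains a point to the left
(`κ = 1`) or to the right (`κ = -1`) of `a`. -/
def Side (κ R : ℝ) (G : ℝ → ℝ → ℝ) (a : ℝ × ℝ) : Prop :=
  ∃ c, JoinedIn (neg R G) (0, R) c ∧ c.2 = a.2 ∧ 0 < κ * (a.1 - c.1)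

/-- Some bounded component lies on the side `κ` of the component of `(0, R)`. -/
def East (κ R : ℝ) (G : ℝ → ℝ → ℝ) : Prop := ∃ a, Inner R G a ∧ Side κ R G a

lemma Inner.joined {R : ℝ} {G : ℝ → ℝ → ℝ} {p q : ℝ × ℝ} (h : Inner R G p)
    (hpq : JoinedIn (neg R G) p q) : Inner R G q :=
  ⟨hpq.target_mem, fun z hz hqz => h.2 z hz (hpq.trans hqz)⟩

lemma Count.le {R : ℝ} {G : ℝ → ℝ → ℝ} {j k : ℕ} (hj : Count R G j) (hk : Count R G k) :
    j ≤ k := by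
  obtain ⟨r, hr⟩ := hj
  obtain ⟨s, hs⟩ := hk
  choose g hg using fun i => hs.2.2 (r i) (hr.1 i)
  have hinj : Function.Injective g := fun a b hab =>
    hr.2.1 a b ((hg a).trans (by rw [hab]; exact (hg b).symm))
  simpa using Fintype.card_le_of_injective g hinj

/-- `φ` pushes `A` into `B`, moving points inside their components and preserving the boundary of
the strip. -/
structure Link (φ : ℝ × ℝ → ℝ × ℝ) (A B : Set (ℝ × ℝ)) : Prop where
  cont : Continuous φ
  map : ∀ p ∈ A, φ p ∈ B
  join : ∀ p ∈ A, JoinedIn A p (φ p)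
  edge : ∀ p ∈ A, |p.2| = 2 → |(φ p).2| = 2

section Link

variable {φ : ℝ × ℝ → ℝ × ℝ} {m n : Par}

lemma Link.joined (h : Link φ (neg 2 (f m)) (neg 2 (f n))) {p q : ℝ × ℝ}
    (hpq : JoinedIn (neg 2 (f m)) p q) : JoinedIn (neg 2 (f n)) (φ p) (φ q) :=
  joined_map h.cont h.map hpq

lemma Link.of_joined (h : Link φ (neg 2 (f m)) (neg 2 (f n)))
    (h' : Link φ (neg 2 (f n)) (neg 2 (f m))) {p q : ℝ × ℝ} (hp : p ∈ neg 2 (f m))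
    (hq : q ∈ neg 2 (f m)) (hpq : JoinedIn (neg 2 (f n)) (φ p) (φ q)) :
    JoinedIn (neg 2 (f m)) p q :=
  ((h.join p hp).trans (h.join _ (h.join p hp).target_mem)).trans <|
    (h'.joined hpq).trans ((h.join q hq).trans (h.join _ (h.join q hq).target_mem)).symm

lemma Link.inner (h : Link φ (neg 2 (f m)) (neg 2 (f n)))
    (h' : Link φ (neg 2 (f n)) (neg 2 (f m))) {p : ℝ × ℝ} (hp : Inner 2 (f m) p) :
    Inner 2 (f n) (φ p) :=
  ⟨h.map p hp.1, fun q hq hpq => hp.2 (φ q) (h'.edge q hpq.target_mem hq) <|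
    ((h.join p hp.1).trans (h.join _ (h.join p hp.1).target_mem)).trans (h'.joined hpq)⟩

lemma Link.reps (h : Link φ (neg 2 (f m)) (neg 2 (f n)))
    (h' : Link φ (neg 2 (f n)) (neg 2 (f m))) {k : ℕ} {r : Fin k → ℝ × ℝ}
    (hr : Reps 2 (f m) r) : Reps 2 (f n) (φ ∘ r) := by
  refine ⟨fun i => h.inner h' (hr.1 i), fun i j hij =>
    hr.2.1 i j (h.of_joined h' (hr.1 i).1 (hr.1 j).1 hij), fun p hp => ?_⟩
  obtain ⟨i, hi⟩ := hr.2.2 (φ p) (h'.inner h hp)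
  exact ⟨i, ((h'.join p hp.1).trans (h'.join _ (h'.join p hp.1).target_mem)).trans (h.joined hi)⟩

lemma Link.count (h : Link φ (neg 2 (f m)) (neg 2 (f n)))
    (h' : Link φ (neg 2 (f n)) (neg 2 (f m))) {k : ℕ} (hk : Count 2 (f m) k) :
    Count 2 (f n) k := by
  obtain ⟨r, hr⟩ := hk
  exact ⟨_, h.reps h' hr⟩

lemma pole_mem (hm : ‖m‖ < 1 / 100) : ((0, 2) : ℝ × ℝ) ∈ neg 2 (f m) :=
  ⟨by norm_num, f_neg_poles hm (by norm_num)⟩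

lemma pole_mem' (hm : ‖m‖ < 1 / 100) : ((0, -2) : ℝ × ℝ) ∈ neg 2 (f m) :=
  ⟨by norm_num, f_neg_poles hm (by norm_num)⟩

/-- Points that lie in both regions are joined in one exactly if they are joined in the other. -/
lemma Link.joined_both (h : Link φ (neg 2 (f m)) (neg 2 (f n)))
    (h' : Link φ (neg 2 (f n)) (neg 2 (f m))) {p q : ℝ × ℝ} (hp : p ∈ neg 2 (f n))
    (hq : q ∈ neg 2 (f n)) (hpq : JoinedIn (neg 2 (f m)) p q) : JoinedIn (neg 2 (f n)) p q :=
  ((h'.join p hp).trans (h.joined hpq)).trans (h'.join q hq).symm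

lemma Link.through (h : Link φ (neg 2 (f m)) (neg 2 (f n)))
    (h' : Link φ (neg 2 (f n)) (neg 2 (f m))) (hn : ‖n‖ < 1 / 100) (ht : Through 2 (f m)) :
    Through 2 (f n) :=
  h.joined_both h' (pole_mem hn) (pole_mem' hn) ht

end Link

lemma exists_link {l : Par} (h : Good l) : ∃ V ∈ 𝓝 l, ∃ φ, ∀ m ∈ V, ∀ n ∈ V,
    Link φ (neg 2 (f m)) (neg 2 (f n)) := by
  obtain ⟨V, hV, φ, hφ, H⟩ := transfer h
  exact ⟨V, hV, φ, fun m hm n hn => ⟨hφ, fun p hp => (H m hm p hp).1 n hn,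
    fun p hp => (H m hm p hp).2.1, fun p hp => (H m hm p hp).2.2⟩⟩

/-- A property that is preserved by links is constant on preconnected sets of parameters outside
the discriminant. -/
lemma const_of_link {T : Set Par} (hT : IsPreconnected T) (hG : ∀ l ∈ T, Good l) {Q : Par → Prop}
    (hQ : ∀ φ m n, Good m → Good n → Link φ (neg 2 (f m)) (neg 2 (f n)) →
      Link φ (neg 2 (f n)) (neg 2 (f m)) → Q m → Q n) {a b : Par} (ha : a ∈ T) (hb : b ∈ T)
    (h : Q a) : Q b := by
  refine const_of_local hT (fun l hl => ?_) ha hb h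
  obtain ⟨V, hV, φ, hφ⟩ := exists_link (hG l hl)
  filter_upwards [mem_nhdsWithin_of_mem_nhds hV, self_mem_nhdsWithin] with m hm hmT
  have hlV := mem_of_mem_nhds hV
  exact ⟨hQ φ l m (hG l hl) (hG m hmT) (hφ l hlV m hm) (hφ m hm l hlV),
    hQ φ m l (hG m hmT) (hG l hl) (hφ m hm l hlV) (hφ l hlV m hm)⟩

/-! ### Intersections with lines -/

lemma f_line (l : Par) (p d : ℝ × ℝ) : ∃ c0 c1 c2 c3 : ℝ, ∀ t,
    f l (p.1 + t * d.1) (p.2 + t * d.2) = c0 + c1 * t + c2 * t ^ 2 + c3 * t ^ 3 +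
      (d.1 ^ 4 - d.2 ^ 4 + l 8 * (d.1 ^ 2 * d.2 ^ 2)) * t ^ 4 := by
  refine ⟨f l p.1 p.2, fx l p.1 p.2 * d.1 + fy l p.1 p.2 * d.2,
    6 * p.1 ^ 2 * d.1 ^ 2 - 6 * p.2 ^ 2 * d.2 ^ 2 + l 3 * d.1 ^ 2 + l 4 * (d.1 * d.2)
      + l 5 * d.2 ^ 2 + l 6 * (2 * p.1 * d.1 * d.2 + p.2 * d.1 ^ 2)
      + l 7 * (2 * p.2 * d.1 * d.2 + p.1 * d.2 ^ 2)
      + l 8 * (p.1 ^ 2 * d.2 ^ 2 + 4 * p.1 * p.2 * d.1 * d.2 + p.2 ^ 2 * d.1 ^ 2),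
    4 * p.1 * d.1 ^ 3 - 4 * p.2 * d.2 ^ 3 + l 6 * (d.1 ^ 2 * d.2) + l 7 * (d.1 * d.2 ^ 2)
      + l 8 * (2 * p.1 * d.1 * d.2 ^ 2 + 2 * p.2 * d.1 ^ 2 * d.2), fun t => ?_⟩
  unfold f fx fy
  ring

/-- Between two points of a line in different components there is a point with `f l ≥ 0`. -/
lemma gap {l : Par} {p d : ℝ × ℝ} {s t : ℝ} (hst : s < t)
    (hs : (p.1 + s * d.1, p.2 + s * d.2) ∈ neg 2 (f l))
    (ht : (p.1 + t * d.1, p.2 + t * d.2) ∈ neg 2 (f l))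
    (hn : ¬ JoinedIn (neg 2 (f l)) (p.1 + s * d.1, p.2 + s * d.2)
      (p.1 + t * d.1, p.2 + t * d.2)) :
    ∃ u, s < u ∧ u < t ∧ 0 ≤ f l (p.1 + u * d.1) (p.2 + u * d.2) := by
  by_contra! hc
  refine hn (joined_curve (γ := fun u => (p.1 + u * d.1, p.2 + u * d.2)) (by fun_prop)
    fun u hu => ?_)
  rw [uIcc_of_le hst.le] at hu
  rcases hu.1.eq_or_lt with rfl | h1
  · exact hs
  rcases hu.2.eq_or_lt with rfl | h2
  · exact ht
  refine ⟨?_, hc u h1 h2⟩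
  have a1 := abs_le.1 hs.1
  have a2 := abs_le.1 ht.1
  simp only at a1 a2
  rw [abs_le]
  simp only
  rcases le_total 0 d.2 with h0 | h0 <;> constructor <;> nlinarith

/-- A line leaves a bounded component before it leaves the strip. -/
lemma exit_pos {l : Par} (hl : ‖l‖ < 1 / 100) {p d : ℝ × ℝ} (hd : d ≠ 0) {s : ℝ}
    (hp : Inner 2 (f l) (p.1 + s * d.1, p.2 + s * d.2)) :
    ∃ t, s < t ∧ 0 ≤ f l (p.1 + t * d.1) (p.2 + t * d.2) := by
  by_contra! hc
  have hp2 := abs_le.1 hp.1.1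
  simp only at hp2
  have key : ∀ t, s ≤ t → |p.2 + t * d.2| = 2 → False := by
    intro t hst ht
    refine hp.2 (p.1 + t * d.1, p.2 + t * d.2) ht
      (joined_curve (γ := fun u => (p.1 + u * d.1, p.2 + u * d.2)) (by fun_prop)
      fun u hu => ?_)
    rw [uIcc_of_le hst] at hu
    rcases hu.1.eq_or_lt with rfl | h1
    · exact hp.1
    refine ⟨?_, hc u h1⟩
    have a2 := abs_le.1 ht.le
    rw [abs_le]
    simp only
    rcases le_total 0 d.2 with h0 | h0 <;> constructor <;> nlinarith [hu.2]
  rcases lt_trichotomy d.2 0 with h | h | h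
  · refine key ((-2 - p.2) / d.2) ?_ (by rw [div_mul_cancel₀ _ h.ne]; norm_num)
    rw [le_div_iff_of_neg h]
    linarith
  · have h1 : d.1 ≠ 0 := fun h1 => hd (Prod.ext h1 h)
    have hd1 : 0 < |d.1| := abs_pos.2 h1
    set t := max (s + 1) ((3 + |p.1|) / |d.1|) with ht
    have ht1 : s + 1 ≤ t := le_max_left _ _
    have ht2 : (3 + |p.1|) / |d.1| ≤ t := le_max_right _ _
    have ht0 : 0 ≤ t := le_trans (by positivity) ht2
    rw [div_le_iff₀ hd1] at ht2
    refine (f_pos_far hl (y := p.2 + t * d.2) ?_ ?_).not_gt (hc t (by linarith))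
    · rw [abs_le, h]
      rw [h] at hp2
      constructor <;> linarith
    · have := abs_sub_abs_le_abs_sub (t * d.1) (-p.1)
      rw [abs_mul, abs_of_nonneg ht0, abs_neg, sub_neg_eq_add, add_comm (t * d.1)] at this
      linarith
  · refine key ((2 - p.2) / d.2) ?_ (by field_simp; norm_num)
    rw [le_div_iff₀ h]
    linarith

lemma exit_neg {l : Par} (hl : ‖l‖ < 1 / 100) {p d : ℝ × ℝ} (hd : d ≠ 0) {s : ℝ}
    (hp : Inner 2 (f l) (p.1 + s * d.1, p.2 + s * d.2)) :
    ∃ t, t < s ∧ 0 ≤ f l (p.1 + t * d.1) (p.2 + t * d.2) := by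
  obtain ⟨t, h1, h2⟩ := exit_pos hl (p := p) (d := -d) (neg_ne_zero.2 hd) (s := -s)
    (by simpa using hp)
  exact ⟨-t, by linarith, by simpa using h2⟩

/-- A vertical line meets at most one bounded component: two of them would force the sign pattern
`+ - + - +` on a quartic with leading coefficient `-1` times a fourth power. -/
lemma x_ne {l : Par} (hl : ‖l‖ < 1 / 100) {a b : ℝ × ℝ} (ha : Inner 2 (f l) a)
    (hb : Inner 2 (f l) b) (hab : ¬ JoinedIn (neg 2 (f l)) a b) : a.1 ≠ b.1 := by
  intro hx
  have hd : b - a ≠ 0 := by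
    intro h
    rw [sub_eq_zero] at h
    subst h
    exact hab (JoinedIn.refl ha.1)
  have e0 : (a.1 + 0 * (b - a).1, a.2 + 0 * (b - a).2) = a := by simp
  have e1 : (a.1 + 1 * (b - a).1, a.2 + 1 * (b - a).2) = b := by simp
  obtain ⟨t0, h0, s0⟩ := exit_neg hl (p := a) hd (s := 0) (by rwa [e0])
  obtain ⟨t2, h1, h2, s2⟩ := gap (l := l) (p := a) (d := b - a) zero_lt_one (by rw [e0]; exact ha.1)
    (by rw [e1]; exact hb.1) (by rwa [e0, e1])
  obtain ⟨t4, h4, s4⟩ := exit_pos hl (p := a) hd (s := 1) (by rwa [e1])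
  obtain ⟨c0, c1, c2, c3, hP⟩ := f_line l a (b - a)
  have := quartic_pos hP h0 h1 h2 h4 s0 (by simpa using ha.1.2) s2
    (by simpa using hb.1.2) s4
  have hd1 : (b - a).1 = 0 := by simp [hx]
  rw [hd1] at this
  have : 0 ≤ (b - a).2 ^ 4 := by positivity
  linarith

/-- A line meets at most two bounded components: for three of them the sign patterns `- + - + -`
and `+ - + - +` would both occur on a polynomial of degree at most four. -/
lemma no_three {l : Par} (hl : ‖l‖ < 1 / 100) {p d : ℝ × ℝ} (hd : d ≠ 0) {s t u : ℝ}
    (hst : s < t) (htu : t < u) (hs : Inner 2 (f l) (p.1 + s * d.1, p.2 + s * d.2))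
    (ht : Inner 2 (f l) (p.1 + t * d.1, p.2 + t * d.2))
    (hu : Inner 2 (f l) (p.1 + u * d.1, p.2 + u * d.2))
    (h1 : ¬ JoinedIn (neg 2 (f l)) (p.1 + s * d.1, p.2 + s * d.2)
      (p.1 + t * d.1, p.2 + t * d.2))
    (h2 : ¬ JoinedIn (neg 2 (f l)) (p.1 + t * d.1, p.2 + t * d.2)
      (p.1 + u * d.1, p.2 + u * d.2)) : False := by
  obtain ⟨g1, a1, b1, z1⟩ := gap hst hs.1 ht.1 h1
  obtain ⟨g2, a2, b2, z2⟩ := gap htu ht.1 hu.1 h2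
  obtain ⟨g3, a3, z3⟩ := exit_pos hl hd hu
  obtain ⟨c0, c1, c2, c3, hP⟩ := f_line l p d
  have n1 := quartic_neg hP a1 b1 a2 b2 hs.1.2.le z1 ht.1.2.le z2 hu.1.2.le (Or.inl ht.1.2)
  have n2 := quartic_pos hP b1 a2 b2 a3 z1 ht.1.2 z2 hu.1.2 z3
  linarith

/-- By Bézout, three points in different bounded components are not collinear. -/
lemma orient_ne {l : Par} (hl : ‖l‖ < 1 / 100) {a b c : ℝ × ℝ} (ha : Inner 2 (f l) a)
    (hb : Inner 2 (f l) b) (hc : Inner 2 (f l) c) (hab : ¬ JoinedIn (neg 2 (f l)) a b)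
    (hac : ¬ JoinedIn (neg 2 (f l)) a c) (hbc : ¬ JoinedIn (neg 2 (f l)) b c) :
    orient a b c ≠ 0 := by
  intro h
  have x1 := x_ne hl ha hb hab
  have x2 := x_ne hl ha hc hac
  have x3 := x_ne hl hb hc hbc
  have hba : b.1 - a.1 ≠ 0 := sub_ne_zero.2 x1.symm
  have hd : b - a ≠ 0 := fun h => hba (congrArg Prod.fst h)
  set s := (c.1 - a.1) / (b.1 - a.1) with hs
  have hsx : s * (b.1 - a.1) = c.1 - a.1 := by rw [hs]; field_simp
  have e0 : (a.1 + 0 * (b - a).1, a.2 + 0 * (b - a).2) = a := by simp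
  have e1 : (a.1 + 1 * (b - a).1, a.2 + 1 * (b - a).2) = b := by simp
  have es : (a.1 + s * (b - a).1, a.2 + s * (b - a).2) = c := by
    refine Prod.ext ?_ ?_
    · show a.1 + s * (b.1 - a.1) = c.1
      linarith
    · show a.2 + s * (b.2 - a.2) = c.2
      refine mul_left_cancel₀ hba ?_
      unfold orient at h
      linear_combination (b.2 - a.2) * hsx - h
  have s0 : s ≠ 0 := fun h0 => x2 (by rw [h0] at hsx; linarith)
  have s1 : s ≠ 1 := fun h0 => x3 (by rw [h0] at hsx; linarith)
  have sym : ∀ {p q : ℝ × ℝ}, ¬ JoinedIn (neg 2 (f l)) p q → ¬ JoinedIn (neg 2 (f l)) q p :=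
    fun hn hpq => hn hpq.symm
  rcases lt_or_gt_of_ne s0 with k0 | k0
  · exact no_three hl hd k0 zero_lt_one (by rwa [es]) (by rwa [e0]) (by rwa [e1])
      (by rw [es, e0]; exact sym hac) (by rwa [e0, e1])
  rcases lt_or_gt_of_ne s1 with k1 | k1
  · exact no_three hl hd k0 k1 (by rwa [e0]) (by rwa [es]) (by rwa [e1])
      (by rwa [e0, es]) (by rw [es, e1]; exact sym hbc)
  · exact no_three hl hd zero_lt_one k1 (by rwa [e0]) (by rwa [e1]) (by rwa [es])
      (by rwa [e0, e1]) (by rwa [e1, es])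

/-! ### The orientation of three bounded components -/

lemma x_lt_move {l : Par} (hl : ‖l‖ < 1 / 100) {a b a' b' : ℝ × ℝ} (ha : Inner 2 (f l) a)
    (hb : Inner 2 (f l) b) (hab : ¬ JoinedIn (neg 2 (f l)) a b)
    (haa : JoinedIn (neg 2 (f l)) a a') (hbb : JoinedIn (neg 2 (f l)) b b') (h : a.1 < b.1) :
    a'.1 < b'.1 := by
  have h1 : 0 < b.1 - a'.1 := joined_pos haa (g := fun z => b.1 - z.1) (by fun_prop)
    (fun z hz => sub_ne_zero.2 fun he => x_ne hl (ha.joined hz) hb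
      (fun hj => hab (hz.trans hj)) he.symm) (sub_pos.2 h)
  have h2 : 0 < b'.1 - a'.1 := joined_pos hbb (g := fun z => z.1 - a'.1) (by fun_prop)
    (fun z hz => sub_ne_zero.2 fun he => x_ne hl (ha.joined haa) (hb.joined hz)
      (fun hj => hab ((haa.trans hj).trans hz.symm)) he.symm) h1
  linarith

lemma orient_move {l : Par} (hl : ‖l‖ < 1 / 100) {a b c a' b' c' : ℝ × ℝ}
    (ha : Inner 2 (f l) a) (hb : Inner 2 (f l) b) (hc : Inner 2 (f l) c)
    (hab : ¬ JoinedIn (neg 2 (f l)) a b) (hac : ¬ JoinedIn (neg 2 (f l)) a c)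
    (hbc : ¬ JoinedIn (neg 2 (f l)) b c) (haa : JoinedIn (neg 2 (f l)) a a')
    (hbb : JoinedIn (neg 2 (f l)) b b') (hcc : JoinedIn (neg 2 (f l)) c c') {κ : ℝ}
    (h : 0 < κ * orient a b c) : 0 < κ * orient a' b' c' := by
  have hκ : κ ≠ 0 := fun h0 => by simp [h0] at h
  have h1 := joined_pos haa (g := fun z => κ * orient z b c) (by unfold orient; fun_prop)
    (fun z hz => mul_ne_zero hκ (orient_ne hl (ha.joined hz) hb hc
      (fun hj => hab (hz.trans hj)) (fun hj => hac (hz.trans hj)) hbc)) h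
  have h2 := joined_pos hbb (g := fun z => κ * orient a' z c) (by unfold orient; fun_prop)
    (fun z hz => mul_ne_zero hκ (orient_ne hl (ha.joined haa) (hb.joined hz) hc
      (fun hj => hab ((haa.trans hj).trans hz.symm)) (fun hj => hac (haa.trans hj))
      (fun hj => hbc (hz.trans hj)))) h1
  exact joined_pos hcc (g := fun z => κ * orient a' b' z) (by unfold orient; fun_prop)
    (fun z hz => mul_ne_zero hκ (orient_ne hl (ha.joined haa) (hb.joined hbb) (hc.joined hz)
      (fun hj => hab ((haa.trans hj).trans hbb.symm)) (fun hj => hac ((haa.trans hj).trans hz.symm))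
      (fun hj => hbc ((hbb.trans hj).trans hz.symm)))) h2

lemma Link.turn {φ : ℝ × ℝ → ℝ × ℝ} {m n : Par} (h : Link φ (neg 2 (f m)) (neg 2 (f n)))
    (h' : Link φ (neg 2 (f n)) (neg 2 (f m))) (hm : ‖m‖ < 1 / 100) {κ : ℝ}
    (ht : Turn κ 2 (f m)) : Turn κ 2 (f n) := by
  obtain ⟨r, hr, h01, h12, ho⟩ := ht
  have hn : ∀ i j, i ≠ j → ¬ JoinedIn (neg 2 (f m)) (r i) (r j) :=
    fun i j hij hj => hij (hr.2.1 i j hj)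
  have hj := fun i => h.join (r i) (hr.1 i).1
  exact ⟨φ ∘ r, h.reps h' hr,
    x_lt_move hm (hr.1 0) (hr.1 1) (hn 0 1 (by decide)) (hj 0) (hj 1) h01,
    x_lt_move hm (hr.1 1) (hr.1 2) (hn 1 2 (by decide)) (hj 1) (hj 2) h12,
    orient_move hm (hr.1 0) (hr.1 1) (hr.1 2) (hn 0 1 (by decide)) (hn 0 2 (by decide))
      (hn 1 2 (by decide)) (hj 0) (hj 1) (hj 2) ho⟩

/-- The two orientations exclude each other: the order by `x` determines which point of one system
of representatives corresponds to which point of another one. -/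
lemma turn_unique {l : Par} (hl : ‖l‖ < 1 / 100) (h1 : Turn 1 2 (f l))
    (h2 : Turn (-1) 2 (f l)) : False := by
  obtain ⟨r, hr, r01, r12, ro⟩ := h1
  obtain ⟨s, hs, s01, s12, so⟩ := h2
  have hn : ∀ i j, i ≠ j → ¬ JoinedIn (neg 2 (f l)) (r i) (r j) :=
    fun i j hij hj => hij (hr.2.1 i j hj)
  choose g hg using fun i => hs.2.2 (r i) (hr.1 i)
  have g01 := x_lt_move hl (hr.1 0) (hr.1 1) (hn 0 1 (by decide)) (hg 0) (hg 1) r01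
  have g12 := x_lt_move hl (hr.1 1) (hr.1 2) (hn 1 2 (by decide)) (hg 1) (hg 2) r12
  have go := orient_move hl (hr.1 0) (hr.1 1) (hr.1 2) (hn 0 1 (by decide)) (hn 0 2 (by decide))
      (hn 1 2 (by decide)) (hg 0) (hg 1) (hg 2) ro
  have hmono : StrictMono fun i => (s i).1 := by
    rw [Fin.strictMono_iff_lt_succ]
    intro i
    fin_cases i
    · exact s01
    · exact s12
  have k01 : g 0 < g 1 := hmono.lt_iff_lt.1 g01
  have k12 : g 1 < g 2 := hmono.lt_iff_lt.1 g12
  have e0 : g 0 = 0 := by omega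
  have e1 : g 1 = 1 := by omega
  have e2 : g 2 = 2 := by omega
  rw [e0, e1, e2] at go
  linarith

/-! ### The position of a bounded component relative to the unbounded one -/

lemma side_or {l : Par} (ht : Through 2 (f l)) {a : ℝ × ℝ} (ha : Inner 2 (f l) a) :
    Side 1 2 (f l) a ∨ Side (-1) 2 (f l) a := by
  have hc : IsPreconnected (pathComponentIn (neg 2 (f l)) ((0, 2) : ℝ × ℝ)) :=
    (isPathConnected_pathComponentIn ht.source_mem).isConnected.isPreconnected
  obtain ⟨z, hz, hz2⟩ := hc.intermediate_value (a := (0, -2)) (b := (0, 2)) ht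
    (mem_pathComponentIn_self ht.source_mem) (f := Prod.snd) (by fun_prop) (abs_le.1 ha.1.1)
  rcases lt_trichotomy z.1 a.1 with h | h | h
  · exact Or.inl ⟨z, hz, hz2, by linarith⟩
  · have : z = a := Prod.ext h hz2
    subst this
    exact absurd (JoinedIn.symm hz) (ha.2 (0, 2) (by norm_num))
  · exact Or.inr ⟨z, hz, hz2, by linarith⟩

lemma side_not {l : Par} {a : ℝ × ℝ} (ha : Inner 2 (f l) a)
    (h1 : Side 1 2 (f l) a) (h2 : Side (-1) 2 (f l) a) : False := by
  obtain ⟨c, hc, hc2, hca⟩ := h1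
  obtain ⟨e, he, he2, hea⟩ := h2
  have na : ∀ z, JoinedIn (neg 2 (f l)) (0, 2) z → ¬ JoinedIn (neg 2 (f l)) a z :=
    fun z hz haz => ha.2 (0, 2) (by norm_num) (haz.trans hz.symm)
  have ec : ((0, a.2) : ℝ × ℝ).1 + c.1 * ((1, 0) : ℝ × ℝ).1 = c.1 ∧
    ((0, a.2) : ℝ × ℝ).2 + c.1 * ((1, 0) : ℝ × ℝ).2 = c.2 := by simp [hc2]
  have ee : ((0, a.2) : ℝ × ℝ).1 + e.1 * ((1, 0) : ℝ × ℝ).1 = e.1 ∧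
    ((0, a.2) : ℝ × ℝ).2 + e.1 * ((1, 0) : ℝ × ℝ).2 = e.2 := by simp [he2]
  have ea : ((0, a.2) : ℝ × ℝ).1 + a.1 * ((1, 0) : ℝ × ℝ).1 = a.1 ∧
    ((0, a.2) : ℝ × ℝ).2 + a.1 * ((1, 0) : ℝ × ℝ).2 = a.2 := by simp
  obtain ⟨g1, a1, b1, z1⟩ := gap (l := l) (p := (0, a.2)) (d := (1, 0)) (s := c.1) (t := a.1)
    (by linarith) (by rw [ec.1, ec.2]; exact hc.target_mem) (by rw [ea.1, ea.2]; exact ha.1)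
    (by rw [ec.1, ec.2, ea.1, ea.2]; exact fun h => na c hc h.symm)
  obtain ⟨g2, a2, b2, z2⟩ := gap (l := l) (p := (0, a.2)) (d := (1, 0)) (s := a.1) (t := e.1)
    (by linarith) (by rw [ea.1, ea.2]; exact ha.1) (by rw [ee.1, ee.2]; exact he.target_mem)
    (by rw [ee.1, ee.2, ea.1, ea.2]; exact na e he)
  obtain ⟨c0, c1, c2, c3, hP⟩ := f_line l (0, a.2) (1, 0)
  have := quartic_neg hP a1 b1 a2 b2 (by rw [ec.1, ec.2]; exact hc.target_mem.2.le) z1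
    (by rw [ea.1, ea.2]; exact ha.1.2.le) z2
    (by rw [ee.1, ee.2]; exact he.target_mem.2.le) (Or.inl (by rw [ea.1, ea.2]; exact ha.1.2))
  norm_num at this

/-- `Side κ` is an open condition on the point: the witness is moved vertically. -/
lemma side_near {l : Par} {κ : ℝ} {a : ℝ × ℝ} (h : Side κ 2 (f l) a) :
    ∀ᶠ b in 𝓝 a, |b.2| ≤ 2 → Side κ 2 (f l) b := by
  obtain ⟨c, hc, hc2, hca⟩ := h
  have cf : Continuous fun y => f l c.1 y := cont_f (by fun_prop) (by fun_prop) (by fun_prop)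
  have hU : {y | f l c.1 y < 0} ∈ 𝓝 c.2 :=
    (isOpen_lt cf continuous_const).mem_nhds hc.target_mem.2
  obtain ⟨r, hr, hrU⟩ := Metric.mem_nhds_iff.1 hU
  have e1 : ∀ᶠ b : ℝ × ℝ in 𝓝 a, b.2 ∈ Metric.ball c.2 r := by
    refine continuous_snd.continuousAt.eventually_mem ?_
    rw [hc2]
    exact Metric.ball_mem_nhds _ hr
  have e2 : ∀ᶠ b : ℝ × ℝ in 𝓝 a, 0 < κ * (b.1 - c.1) :=
    (isOpen_lt continuous_const (by fun_prop)).mem_nhds hca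
  filter_upwards [e1, e2] with b hb1 hb2 hb
  refine ⟨(c.1, b.2), hc.trans ?_, rfl, hb2⟩
  refine joined_y (x := c.1) (a := c.2) (b := b.2) fun z hz => ⟨?_, hrU ?_⟩
  · rw [← segment_eq_uIcc] at hz
    have hconv : Convex ℝ (Icc (-2 : ℝ) 2) := convex_Icc _ _
    exact abs_le.2 (hconv.segment_subset (abs_le.1 hc.target_mem.1) (abs_le.1 hb) hz)
  · rw [← segment_eq_uIcc] at hz
    exact (convex_ball c.2 r).segment_subset (Metric.mem_ball_self hr) hb1 hz

lemma side_joined {l : Par} (ht : Through 2 (f l)) {a b : ℝ × ℝ} (ha : Inner 2 (f l) a)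
    (hab : JoinedIn (neg 2 (f l)) a b) (h : Side 1 2 (f l) a) : Side 1 2 (f l) b := by
  have hc : IsPreconnected (pathComponentIn (neg 2 (f l)) a) :=
    (isPathConnected_pathComponentIn ha.1).isConnected.isPreconnected
  refine const_of_local hc (Q := fun z => Side 1 2 (f l) z) (fun z hz => ?_)
    (mem_pathComponentIn_self ha.1) hab h
  have hz : JoinedIn (neg 2 (f l)) a z := hz
  rcases side_or ht (ha.joined hz) with hs | hs
  · filter_upwards [mem_nhdsWithin_of_mem_nhds (side_near hs), self_mem_nhdsWithin] with w hw hw'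
    exact iff_of_true hs (hw (ha.joined hw').1.1)
  · filter_upwards [mem_nhdsWithin_of_mem_nhds (side_near hs), self_mem_nhdsWithin] with w hw hw'
    exact iff_of_false (fun h1 => side_not (ha.joined hz) h1 hs)
      (fun h1 => side_not (ha.joined hw') h1 (hw (ha.joined hw').1.1))

lemma east_or {l : Par} (ht : Through 2 (f l)) (h1 : Count 2 (f l) 1) :
    East 1 2 (f l) ∨ East (-1) 2 (f l) := by
  obtain ⟨r, hr⟩ := h1
  exact (side_or ht (hr.1 0)).imp (fun h => ⟨_, hr.1 0, h⟩) (fun h => ⟨_, hr.1 0, h⟩)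

lemma east_not {l : Par} (ht : Through 2 (f l)) (h1 : Count 2 (f l) 1) (he : East 1 2 (f l))
    (hw : East (-1) 2 (f l)) : False := by
  obtain ⟨r, hr⟩ := h1
  obtain ⟨a, ha, hsa⟩ := he
  obtain ⟨b, hb, hsb⟩ := hw
  obtain ⟨i, hi⟩ := hr.2.2 a ha
  obtain ⟨j, hj⟩ := hr.2.2 b hb
  obtain rfl := Subsingleton.elim i j
  exact side_not hb (side_joined ht ha (hi.trans hj.symm) hsa) hsb

lemma east_near {l : Par} (hl : Good l) {κ : ℝ} (h : East κ 2 (f l)) :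
    ∀ᶠ m in 𝓝 l, East κ 2 (f m) := by
  obtain ⟨V, hV, φ, hφ⟩ := exists_link hl
  obtain ⟨a, ha, c, hc, hc2, hca⟩ := h
  have open_neg : ∀ p ∈ neg 2 (f l), ∀ᶠ m in 𝓝 l, p ∈ neg 2 (f m) := fun p hp => by
    have cf : Continuous fun m => f m p.1 p.2 := cont_f (by fun_prop) (by fun_prop) (by fun_prop)
    filter_upwards [(isOpen_lt cf continuous_const).mem_nhds hp.2] with m hm
    exact ⟨hp.1, hm⟩
  filter_upwards [hV, open_neg a ha.1, open_neg c hc.target_mem, open_neg (0, 2) hc.source_mem]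
    with m hm ham hcm h2m
  have hlV := mem_of_mem_nhds hV
  have L := hφ l hlV m hm
  have L' := hφ m hm l hlV
  exact ⟨a, (L.inner L' ha).joined (L'.join a ham).symm, c, L.joined_both L' h2m hcm hc, hc2, hca⟩

lemma east_const {T : Set Par} (hT : IsPreconnected T) (hG : ∀ l ∈ T, Good l)
    (hth : ∀ l ∈ T, Through 2 (f l)) (h1 : ∀ l ∈ T, Count 2 (f l) 1) {a b : Par} (ha : a ∈ T)
    (hb : b ∈ T) (h : East 1 2 (f a)) : East 1 2 (f b) := by
  refine const_of_local hT (Q := fun l => East 1 2 (f l)) (fun l hl => ?_) ha hb h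
  rcases east_or (hth l hl) (h1 l hl) with he | he
  · filter_upwards [mem_nhdsWithin_of_mem_nhds (east_near (hG l hl) he)] with m hm
    exact iff_of_true he hm
  · filter_upwards [mem_nhdsWithin_of_mem_nhds (east_near (hG l hl) he), self_mem_nhdsWithin]
      with m hm hmT
    exact iff_of_false (fun h => east_not (hth l hl) (h1 l hl) h he)
      (fun h => east_not (hth m hmT) (h1 m hmT) h hm)

/-! ### Rescaling and reflection -/

/-- The diagonal linear map `(x, y) ↦ (a x, b y)`. -/
def dil (a b : ℝ) (p : ℝ × ℝ) : ℝ × ℝ := (a * p.1, b * p.2)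

lemma continuous_dil (a b : ℝ) : Continuous (dil a b) := by unfold dil; fun_prop

/-- `dil a b` carries the strip `|y| ≤ R` to `|y| ≤ S`, and `G` to `H` up to a positive factor. -/
structure Dil (a b R S : ℝ) (G H : ℝ → ℝ → ℝ) : Prop where
  ha : a ≠ 0
  hb : b ≠ 0
  strip : |b| * R = S
  fac : ∃ e > 0, ∀ x y, H (a * x) (b * y) = e * G x y

section Dil

variable {a b R S : ℝ} {G H : ℝ → ℝ → ℝ}

lemma Dil.symm (h : Dil a b R S G H) : Dil a⁻¹ b⁻¹ S R H G := by
  obtain ⟨e, he, hH⟩ := h.fac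
  have ha := h.ha
  have hb := h.hb
  refine ⟨inv_ne_zero ha, inv_ne_zero hb, ?_, e⁻¹, by positivity, fun x y => ?_⟩
  · rw [← h.strip, abs_inv, ← mul_assoc, inv_mul_cancel₀ (abs_ne_zero.2 hb), one_mul]
  · have := hH (a⁻¹ * x) (b⁻¹ * y)
    rw [mul_inv_cancel_left₀ ha, mul_inv_cancel_left₀ hb] at this
    rw [this, inv_mul_cancel_left₀ he.ne']

lemma Dil.map (h : Dil a b R S G H) {p : ℝ × ℝ} (hp : p ∈ neg R G) : dil a b p ∈ neg S H := by
  obtain ⟨e, he, hH⟩ := h.fac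
  refine ⟨?_, ?_⟩
  · rw [← h.strip]
    simp only [dil, abs_mul]
    exact mul_le_mul_of_nonneg_left hp.1 (abs_nonneg _)
  · simp only [dil, hH]
    exact mul_neg_of_pos_of_neg he hp.2

lemma Dil.joined (h : Dil a b R S G H) {p q : ℝ × ℝ} (hpq : JoinedIn (neg R G) p q) :
    JoinedIn (neg S H) (dil a b p) (dil a b q) :=
  joined_map (continuous_dil a b) (fun _ hp => h.map hp) hpq

lemma Dil.left_inv (h : Dil a b R S G H) (p : ℝ × ℝ) : dil a⁻¹ b⁻¹ (dil a b p) = p := by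
  simp [dil, h.ha, h.hb]

lemma Dil.right_inv (h : Dil a b R S G H) (p : ℝ × ℝ) : dil a b (dil a⁻¹ b⁻¹ p) = p := by
  simp [dil, h.ha, h.hb]

lemma Dil.of_joined (h : Dil a b R S G H) {p q : ℝ × ℝ}
    (hpq : JoinedIn (neg S H) (dil a b p) (dil a b q)) : JoinedIn (neg R G) p q := by
  simpa only [h.left_inv] using h.symm.joined hpq

lemma Dil.inner (h : Dil a b R S G H) {p : ℝ × ℝ} (hp : Inner R G p) :
    Inner S H (dil a b p) := by
  refine ⟨h.map hp.1, fun q hq hpq => hp.2 (dil a⁻¹ b⁻¹ q) ?_ (h.of_joined ?_)⟩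
  · rw [← h.symm.strip]
    simp only [dil, abs_mul, hq]
  · rwa [h.right_inv]

lemma Dil.reps (h : Dil a b R S G H) {k : ℕ} {r : Fin k → ℝ × ℝ} (hr : Reps R G r) :
    Reps S H (dil a b ∘ r) := by
  refine ⟨fun i => h.inner (hr.1 i), fun i j hij => hr.2.1 i j (h.of_joined hij), fun p hp => ?_⟩
  obtain ⟨i, hi⟩ := hr.2.2 _ (h.symm.inner hp)
  refine ⟨i, ?_⟩
  simpa only [h.right_inv, Function.comp_apply] using h.joined hi

lemma Dil.count (h : Dil a b R S G H) {k : ℕ} (hk : Count R G k) : Count S H k := by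
  obtain ⟨r, hr⟩ := hk
  exact ⟨_, h.reps hr⟩

lemma Dil.through (h : Dil a b R S G H) (ht : Through R G) : Through S H := by
  have hj := h.joined ht
  have hs := h.strip
  rcases lt_or_gt_of_ne h.hb with hb | hb
  · rw [abs_of_neg hb] at hs
    have e1 : dil a b (0, R) = (0, -S) := by simp [dil, ← hs]
    have e2 : dil a b (0, -R) = (0, S) := by simp [dil, ← hs]
    rw [e1, e2] at hj
    exact hj.symm
  · rw [abs_of_pos hb] at hs
    have e1 : dil a b (0, R) = (0, S) := by simp [dil, ← hs]
    have e2 : dil a b (0, -R) = (0, -S) := by simp [dil, ← hs]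
    rw [e1, e2] at hj
    exact hj

lemma Dil.turn (h : Dil a b R S G H) (ha : 0 < a) {κ μ : ℝ} (hκ : μ * b = κ * |b|)
    (ht : Turn κ R G) : Turn μ S H := by
  obtain ⟨r, hr, h01, h12, ho⟩ := ht
  refine ⟨_, h.reps hr, mul_lt_mul_of_pos_left h01 ha, mul_lt_mul_of_pos_left h12 ha, ?_⟩
  have hb : 0 < |b| := abs_pos.2 h.hb
  have e : μ * orient ((dil a b ∘ r) 0) ((dil a b ∘ r) 1) ((dil a b ∘ r) 2) =
      a * |b| * (κ * orient (r 0) (r 1) (r 2)) := by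
    simp only [orient, dil, Function.comp_apply]
    linear_combination (a * ((r 1).1 - (r 0).1) * ((r 2).2 - (r 0).2)
      - a * ((r 1).2 - (r 0).2) * ((r 2).1 - (r 0).1)) * hκ
  rw [e]
  positivity

lemma Dil.east (h : Dil a b R S G H) (hb : 0 < b) {κ μ : ℝ} (hκ : μ * a = κ * |a|)
    (he : East κ R G) : East μ S H := by
  obtain ⟨p, hp, c, hc, hc2, hpc⟩ := he
  refine ⟨_, h.inner hp, dil a b c, ?_, by simp [dil, hc2], ?_⟩
  · have hs := h.strip
    rw [abs_of_pos hb] at hs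
    have e1 : dil a b (0, R) = (0, S) := by simp [dil, ← hs]
    rw [← e1]
    exact h.joined hc
  · have ha : 0 < |a| := abs_pos.2 h.ha
    have e : μ * ((dil a b p).1 - (dil a b c).1) = |a| * (κ * (p.1 - c.1)) := by
      simp only [dil]
      linear_combination (p.1 - c.1) * hκ
    rw [e]
    positivity

end Dil

/-- The quasihomogeneous action on parameters, composed with the reflection in `y` if `k = -1`. -/
def scl (t k : ℝ) (l : Par) : Par :=
  !₂[t ^ 4 * l 0, t ^ 3 * l 1, k * t ^ 3 * l 2, t ^ 2 * l 3, k * t ^ 2 * l 4, t ^ 2 * l 5,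
    k * t * l 6, t * l 7, l 8]

lemma f_scl (t : ℝ) {k : ℝ} (hk : k ^ 2 = 1) (l : Par) (x y : ℝ) :
    f (scl t k l) (t * x) (k * t * y) = t ^ 4 * f l x y := by
  have hk4 : k ^ 4 = 1 := by rw [show k ^ 4 = (k ^ 2) ^ 2 by ring, hk]; norm_num
  simp [f, scl]
  linear_combination (t ^ 4 * l 2 * y + t ^ 4 * l 4 * x * y + t ^ 4 * l 5 * y ^ 2
    + t ^ 4 * l 6 * x ^ 2 * y + t ^ 4 * l 7 * x * y ^ 2 + t ^ 4 * l 8 * x ^ 2 * y ^ 2) * hk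
    - t ^ 4 * y ^ 4 * hk4

lemma fx_scl (t : ℝ) {k : ℝ} (hk : k ^ 2 = 1) (l : Par) (x y : ℝ) :
    fx (scl t k l) (t * x) (k * t * y) = t ^ 3 * fx l x y := by
  simp [fx, scl]
  linear_combination (t ^ 3 * l 4 * y + 2 * t ^ 3 * l 6 * x * y + t ^ 3 * l 7 * y ^ 2
    + 2 * t ^ 3 * l 8 * x * y ^ 2) * hk

lemma fy_scl (t : ℝ) {k : ℝ} (hk : k ^ 2 = 1) (l : Par) (x y : ℝ) :
    fy (scl t k l) (t * x) (k * t * y) = k * t ^ 3 * fy l x y := by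
  simp [fy, scl]
  linear_combination (-4 * k * t ^ 3 * y ^ 3) * hk

lemma exists_scl {l : Par} (h8 : l 8 = 0) (k : ℝ) {d : ℝ} (hd : 0 < d) :
    ∃ t, 0 < t ∧ t ≤ 1 / 5 ∧ ‖scl t k l‖ < d := by
  have hc : Continuous fun t => scl t k l := by
    unfold scl
    refine (PiLp.continuous_toLp 2 _).comp (continuous_pi fun i => ?_)
    fin_cases i <;> simp <;> fun_prop
  have h0 : scl 0 k l = 0 := by
    ext i
    fin_cases i <;> simp [scl, h8]
  have he : ∀ᶠ t in 𝓝 (0 : ℝ), ‖scl t k l‖ < d :=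
    (isOpen_lt hc.norm continuous_const).mem_nhds (by simp [h0, hd])
  obtain ⟨r, hr, hrs⟩ := Metric.mem_nhds_iff.1 he
  refine ⟨min (r / 2) (1 / 5), by positivity, min_le_right _ _, hrs ?_⟩
  rw [Metric.mem_ball, Real.dist_eq, sub_zero, abs_of_pos (by positivity)]
  exact (min_le_left _ _).trans_lt (by linarith)

lemma scl_good {l : Par} (hl : ∀ x y, ¬ (f l x y = 0 ∧ fx l x y = 0 ∧ fy l x y = 0)) {t k : ℝ}
    (ht : 0 < t) (hk : k ^ 2 = 1) (hn : ‖scl t k l‖ < 1 / 100) : Good (scl t k l) := by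
  refine ⟨hn, fun x y ⟨h0, h1, h2⟩ => hl (x / t) (k * y / t) ?_⟩
  have k0 : k ≠ 0 := fun h => by simp [h] at hk
  have ex : t * (x / t) = x := by field_simp
  have ey : k * t * (k * y / t) = y := by
    field_simp
    rw [hk, one_mul]
  refine ⟨?_, ?_, ?_⟩
  · have := f_scl t hk l (x / t) (k * y / t)
    rw [ex, ey, h0] at this
    simpa [ht.ne'] using this.symm
  · have := fx_scl t hk l (x / t) (k * y / t)
    rw [ex, ey, h1] at this
    simpa [ht.ne'] using this.symm
  · have := fy_scl t hk l (x / t) (k * y / t)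
    rw [ex, ey, h2] at this
    simpa [ht.ne', k0] using this.symm

lemma dil_scl (l : Par) {t k : ℝ} (ht : 0 < t) (hk : |k| = 1) :
    Dil t (k * t) (2 / t) 2 (f l) (f (scl t k l)) := by
  have k0 : k ≠ 0 := fun h => by simp [h] at hk
  refine ⟨ht.ne', mul_ne_zero k0 ht.ne', ?_, t ^ 4, by positivity,
    f_scl t (by rw [← sq_abs, hk]; norm_num) l⟩
  rw [abs_mul, hk, abs_of_pos ht]
  field_simp

lemma dil_scl_sig (l : Par) {t k : ℝ} (ht : 0 < t) (hk : |k| = 1) :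
    Dil (k * t) t (2 / t) 2 (f (sig l)) (f (sig (scl t k l))) := by
  have k0 : k ≠ 0 := fun h => by simp [h] at hk
  refine ⟨mul_ne_zero k0 ht.ne', ht.ne', ?_, t ^ 4, by positivity, fun x y => ?_⟩
  · rw [abs_of_pos ht]
    field_simp
  · rw [f_sig, f_sig, f_scl t (by rw [← sq_abs, hk]; norm_num)]
    ring

/-! ### Tools for the sample functions -/

/-- Representatives are certified by functions `g i` that have no zero on the negative region and
are positive at `r i` only. -/
lemma reps_of {M : ℝ} {G : ℝ → ℝ → ℝ} {k : ℕ} {r : Fin k → ℝ × ℝ} (g : Fin k → ℝ × ℝ → ℝ)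
    (hg : ∀ i, Continuous (g i)) (hr : ∀ i, r i ∈ neg M G) (h0 : ∀ i, ∀ z ∈ neg M G, g i z ≠ 0)
    (hpos : ∀ i, 0 < g i (r i)) (hneg : ∀ i j, i ≠ j → g i (r j) ≤ 0)
    (hedge : ∀ i, ∀ q : ℝ × ℝ, |q.2| = M → g i q ≤ 0)
    (hall : ∀ p ∈ neg M G, (∃ q : ℝ × ℝ, |q.2| = M ∧ JoinedIn (neg M G) p q) ∨
      ∃ i, JoinedIn (neg M G) p (r i)) : Reps M G r := by
  have key : ∀ i q, JoinedIn (neg M G) (r i) q → 0 < g i q := fun i q h =>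
    joined_pos h (hg i) (fun z hz => h0 i z hz.target_mem) (hpos i)
  refine ⟨fun i => ⟨hr i, fun q hq h => (key i q h).not_ge (hedge i q hq)⟩, fun i j h => ?_,
    fun p hp => ?_⟩
  · by_contra hij
    exact (key i _ h).not_ge (hneg i j hij)
  · rcases hall p hp.1 with ⟨q, hq, h⟩ | h
    · exact absurd h (hp.2 q hq)
    · exact h

/-- A horizontal line in the positive region separates top from bottom, and it joins the two sides
of the square in the dual picture. -/
lemma through_of_line {l : Par} {M y : ℝ} (hM : 10 ≤ M) (hy : |y| ≤ 5) (h : ∀ x, 0 < f l x y)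
    (h1 : ∀ z, |z| ≤ 5 → 0 < f l M z) (h2 : ∀ z, |z| ≤ 5 → 0 < f l (-M) z) :
    ¬ Through M (f l) ∧ Through M (f (sig l)) := by
  have hy' := abs_le.1 hy
  constructor
  · intro ht
    have := joined_pos ht (g := fun p => p.2 - y) (by fun_prop) (fun z hz hz0 => by
      have hlt := hz.target_mem.2
      rw [sub_eq_zero.1 hz0] at hlt
      exact hlt.not_gt (h z.1)) (by simp only; linarith)
    simp only at this
    linarith
  · have hside : ∀ z ∈ uIcc 0 y, |z| ≤ 5 := by
      intro z hz
      rw [← segment_eq_uIcc] at hz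
      exact abs_le.2 ((convex_Icc (-5 : ℝ) 5).segment_subset ⟨by norm_num, by norm_num⟩ hy' hz)
    have j1 : JoinedIn (neg M (f (sig l))) (0, M) (y, M) := joined_x fun z hz =>
      ⟨(abs_of_nonneg (by linarith)).le, by
        simp only [f_sig]; exact neg_neg_of_pos (h1 z (hside z hz))⟩
    have j2 : JoinedIn (neg M (f (sig l))) (0, -M) (y, -M) := joined_x fun z hz =>
      ⟨by rw [abs_neg]; exact (abs_of_nonneg (by linarith)).le, by
        simp only [f_sig]; exact neg_neg_of_pos (h2 z (hside z hz))⟩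
    have j3 : JoinedIn (neg M (f (sig l))) (y, M) (y, -M) := joined_y fun z hz => by
      rw [uIcc_of_ge (by linarith)] at hz
      exact ⟨abs_le.2 hz, by simp only [f_sig]; exact neg_neg_of_pos (h z)⟩
    exact (j1.trans j3).trans j2.symm

/-- Every point between `0` and `x` has a square at most `x ^ 2`. -/
lemma sq_le_of_mem {x z : ℝ} (h : z ∈ uIcc x 0) : z ^ 2 ≤ x ^ 2 := by
  rcases mem_uIcc.1 h with h | h <;> nlinarith

/-- Moving from `x` to a square root `s` of `m` on the same side of `0` brings the square closer
to `m`. -/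
lemma sq_sub_sq_le {x s z m : ℝ} (hs : s ^ 2 = m) (hxs : 0 ≤ x * s) (h : z ∈ uIcc x s) :
    (z ^ 2 - m) ^ 2 ≤ (x ^ 2 - m) ^ 2 := by
  subst hs
  have key : (x ^ 2 ≤ z ^ 2 ∧ z ^ 2 ≤ s ^ 2) ∨ (s ^ 2 ≤ z ^ 2 ∧ z ^ 2 ≤ x ^ 2) := by
    rcases lt_trichotomy s 0 with h0 | h0 | h0
    · have hx : x ≤ 0 := by nlinarith
      rcases mem_uIcc.1 h with h | h
      · right; constructor <;> nlinarith
      · left; constructor <;> nlinarith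
    · subst h0
      exact Or.inr ⟨by nlinarith, sq_le_of_mem h⟩
    · have hx : 0 ≤ x := by nlinarith
      rcases mem_uIcc.1 h with h | h
      · left; constructor <;> nlinarith
      · right; constructor <;> nlinarith
  rcases key with ⟨h1, h2⟩ | ⟨h1, h2⟩ <;> nlinarith

lemma joined_up {M x y : ℝ} {G : ℝ → ℝ → ℝ} (hM : 0 ≤ M) (hp : (x, y) ∈ neg M G)
    (h : ∀ z, y ≤ z → G x z < 0) : ∃ q : ℝ × ℝ, |q.2| = M ∧ JoinedIn (neg M G) (x, y) q := by
  have hy := abs_le.1 hp.1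
  refine ⟨(x, M), abs_of_nonneg hM, joined_y fun z hz => ?_⟩
  rw [uIcc_of_le hy.2] at hz
  exact ⟨abs_le.2 ⟨hy.1.trans hz.1, hz.2⟩, h z hz.1⟩

lemma joined_down {M x y : ℝ} {G : ℝ → ℝ → ℝ} (hM : 0 ≤ M) (hp : (x, y) ∈ neg M G)
    (h : ∀ z, z ≤ y → G x z < 0) : ∃ q : ℝ × ℝ, |q.2| = M ∧ JoinedIn (neg M G) (x, y) q := by
  have hy := abs_le.1 hp.1
  refine ⟨(x, -M), by rw [abs_neg, abs_of_nonneg hM], joined_y fun z hz => ?_⟩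
  rw [uIcc_of_ge hy.1] at hz
  exact ⟨abs_le.2 ⟨hz.1, hz.2.trans hy.2⟩, h z hz.2⟩

/-- The end of a path may be reached from any point joined to its start. -/
lemma edge_trans {M : ℝ} {G : ℝ → ℝ → ℝ} {p q : ℝ × ℝ} (h : JoinedIn (neg M G) p q)
    (hq : ∃ z : ℝ × ℝ, |z.2| = M ∧ JoinedIn (neg M G) q z) :
    ∃ z : ℝ × ℝ, |z.2| = M ∧ JoinedIn (neg M G) p z := by
  obtain ⟨z, hz, hqz⟩ := hq
  exact ⟨z, hz, h.trans hqz⟩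

/-- Data of a sample parameter that do not depend on its chamber. -/
structure Base (l : Par) : Prop where
  top : l 8 = 0
  smooth : ∀ x y, ¬ (f l x y = 0 ∧ fx l x y = 0 ∧ fy l x y = 0)
  nthr : ∀ M, 10 ≤ M → ¬ Through M (f l)
  thr : ∀ M, 10 ≤ M → Through M (f (sig l))

lemma Base.mk' {l : Par} (h8 : l 8 = 0)
    (hs : ∀ x y, ¬ (f l x y = 0 ∧ fx l x y = 0 ∧ fy l x y = 0)) (y : ℝ) (hy : |y| ≤ 5)
    (h : ∀ x, 0 < f l x y) (hev : ∀ x y, f l (-x) y = f l x y)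
    (h1 : ∀ M, 10 ≤ M → ∀ z, |z| ≤ 5 → 0 < f l M z) : Base l :=
  have H := fun M (hM : 10 ≤ M) => through_of_line hM hy h (h1 M hM)
    (fun z hz => by rw [hev]; exact h1 M hM z hz)
  ⟨h8, hs, fun M hM => (H M hM).1, fun M hM => (H M hM).2⟩

/-! ### Samples with at most two bounded components -/

/-- `x⁴ - y⁴ + 1` -/
def l0 : Par := !₂[1, 0, 0, 0, 0, 0, 0, 0, 0]

lemma f_l0 (x y : ℝ) : f l0 x y = x ^ 4 - y ^ 4 + 1 := by simp [f, l0]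
lemma fx_l0 (x y : ℝ) : fx l0 x y = 4 * x ^ 3 := by simp [fx, l0]
lemma fy_l0 (x y : ℝ) : fy l0 x y = -4 * y ^ 3 := by simp [fy, l0]

/-- In the region considered the term `M ^ 4` dominates. -/
lemma big_bounds {M z : ℝ} (hM : 10 ≤ M) (hz : |z| ≤ 5) :
    100 ≤ M ^ 2 ∧ -5 ≤ z ∧ z ≤ 5 ∧ z ^ 2 ≤ 25 :=
  ⟨by nlinarith, (abs_le.1 hz).1, (abs_le.1 hz).2, by nlinarith [abs_le.1 hz]⟩

lemma base_l0 : Base l0 := by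
  refine Base.mk' (by simp [l0]) ?_ 0 (by norm_num) (fun x => ?_) (fun x y => ?_)
    (fun M hM z hz => ?_)
  · rintro x y ⟨h0, h1, h2⟩
    rw [f_l0] at h0
    rw [fx_l0] at h1
    rw [fy_l0] at h2
    have hx : x = 0 := by simpa using h1
    have hy : y = 0 := by simpa using h2
    rw [hx, hy] at h0
    norm_num at h0
  · rw [f_l0]
    have : 0 ≤ x ^ 4 := by positivity
    linarith
  · simp only [f_l0]; ring
  · rw [f_l0]
    obtain ⟨b1, -, -, b2⟩ := big_bounds hM hz
    nlinarith [sq_nonneg z]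

lemma count_l0 {M : ℝ} (hM : 10 ≤ M) : Count M (f l0) 0 := by
  refine ⟨Fin.elim0, reps_of Fin.elim0 (fun i => i.elim0) (fun i => i.elim0) (fun i => i.elim0)
    (fun i => i.elim0) (fun i => i.elim0) (fun i => i.elim0) fun p hp => Or.inl ?_⟩
  obtain ⟨x, y⟩ := p
  have h := hp.2
  simp only [f_l0] at h
  rcases le_total 0 y with hy | hy
  · refine joined_up (by linarith) hp fun z hz => ?_
    rw [f_l0]
    have : y ^ 4 ≤ z ^ 4 := by gcongr
    linarith
  · refine joined_down (by linarith) hp fun z hz => ?_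
    rw [f_l0]
    have : (-y) ^ 4 ≤ (-z) ^ 4 := by gcongr; linarith
    nlinarith

lemma dual_l0 {M : ℝ} (hM : 10 ≤ M) : Count M (f (sig l0)) 0 := by
  refine ⟨Fin.elim0, reps_of Fin.elim0 (fun i => i.elim0) (fun i => i.elim0) (fun i => i.elim0)
    (fun i => i.elim0) (fun i => i.elim0) (fun i => i.elim0) fun p hp => Or.inl ?_⟩
  obtain ⟨x, y⟩ := p
  have h := hp.2
  simp only [f_sig, f_l0] at h
  have j : JoinedIn (neg M (f (sig l0))) (x, y) (0, y) := joined_x fun z hz => ⟨hp.1, by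
    simp only [f_sig, f_l0]
    have := sq_le_of_mem hz
    nlinarith [sq_nonneg z]⟩
  refine edge_trans j (joined_up (by linarith) j.target_mem fun z hz => ?_)
  rw [f_sig, f_l0]
  nlinarith [sq_nonneg (z ^ 2)]

/-- `x⁴ - (y² - 1)² + 1/2` -/
noncomputable def l1 : Par := !₂[-1 / 2, 0, 0, 0, 0, 2, 0, 0, 0]

lemma f_l1 (x y : ℝ) : f l1 x y = x ^ 4 - (y ^ 2 - 1) ^ 2 + 1 / 2 := by simp [f, l1]; ring
lemma fx_l1 (x y : ℝ) : fx l1 x y = 4 * x ^ 3 := by simp [fx, l1]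
lemma fy_l1 (x y : ℝ) : fy l1 x y = -4 * (y * (y ^ 2 - 1)) := by simp [fy, l1]; ring

lemma base_l1 : Base l1 := by
  refine Base.mk' (by simp [l1]) ?_ 1 (by norm_num) (fun x => ?_) (fun x y => ?_)
    (fun M hM z hz => ?_)
  · rintro x y ⟨h0, h1, h2⟩
    rw [f_l1] at h0
    rw [fx_l1] at h1
    rw [fy_l1] at h2
    have hx : x = 0 := by simpa using h1
    subst hx
    have h3 : y = 0 ∨ y ^ 2 - 1 = 0 := by simpa using h2
    rcases h3 with h3 | h3
    · subst h3; norm_num at h0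
    · rw [h3] at h0; norm_num at h0
  · rw [f_l1]
    have : 0 ≤ x ^ 4 := by positivity
    linarith
  · simp only [f_l1]; ring
  · rw [f_l1]
    obtain ⟨b1, -, -, b2⟩ := big_bounds hM hz
    nlinarith [sq_nonneg z]

/-- Vertical motion decreasing a function of the form `c - (y² - 1)²`, starting where it
is negative. -/
lemma vert_move {x y M c : ℝ} {G : ℝ → ℝ → ℝ} (hM : 10 ≤ M)
    (hG : ∀ z, G x z = c - (z ^ 2 - 1) ^ 2) (hp : (x, y) ∈ neg M G) :
    (∃ q : ℝ × ℝ, |q.2| = M ∧ JoinedIn (neg M G) (x, y) q) ∨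
      JoinedIn (neg M G) (x, y) (x, 0) := by
  have h := hp.2
  simp only [hG] at h
  rcases lt_or_ge 1 (y ^ 2) with h1 | h1
  · left
    rcases le_total 0 y with hy | hy
    · refine joined_up (by linarith) hp fun z hz => ?_
      rw [hG]
      have : y ^ 2 ≤ z ^ 2 := by gcongr
      nlinarith
    · refine joined_down (by linarith) hp fun z hz => ?_
      rw [hG]
      have : y ^ 2 ≤ z ^ 2 := by nlinarith
      nlinarith
  · right
    refine joined_y fun z hz => ?_
    have h2 := sq_le_of_mem hz
    refine ⟨?_, ?_⟩
    · have := abs_le_one_iff_mul_self_le_one.2 (by nlinarith : z * z ≤ 1)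
      simp only; linarith
    · simp only [hG]
      nlinarith

lemma count_l1 {M : ℝ} (hM : 10 ≤ M) : Count M (f l1) 1 := by
  refine ⟨fun _ => (0, 0), reps_of (fun _ p => 1 - |p.2|) (fun _ => by fun_prop)
    (fun _ => ⟨?_, ?_⟩) (fun _ z hz h0 => ?_) (fun _ => by simp)
    (fun i j hij => absurd (Subsingleton.elim i j) hij) (fun _ q hq => ?_) fun p hp => ?_⟩
  · simp only [abs_zero]; linarith
  · norm_num [f_l1]
  · have h := hz.2
    have h1 : z.2 ^ 2 = 1 := by rw [← sq_abs, ← sub_eq_zero.1 h0]; norm_num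
    rw [f_l1, h1] at h
    have : 0 ≤ z.1 ^ 4 := by positivity
    linarith
  · simp only [hq]; linarith
  · obtain ⟨x, y⟩ := p
    have h := hp.2
    simp only [f_l1] at h
    have j : JoinedIn (neg M (f l1)) (x, y) (0, y) := joined_x fun z hz => ⟨hp.1, by
      simp only [f_l1]
      have := sq_le_of_mem hz
      nlinarith [sq_nonneg z]⟩
    rcases vert_move (c := 1 / 2) hM (fun z => by rw [f_l1]; ring) j.target_mem
      with h' | h'
    · exact Or.inl (edge_trans j h')
    · exact Or.inr ⟨0, j.trans h'⟩

/-- `(x² - 1)² - (y² - 1)² + 1/2` -/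
noncomputable def l2 : Par := !₂[1 / 2, 0, 0, -2, 0, 2, 0, 0, 0]

lemma f_l2 (x y : ℝ) : f l2 x y = (x ^ 2 - 1) ^ 2 - (y ^ 2 - 1) ^ 2 + 1 / 2 := by
  simp [f, l2]; ring
lemma fx_l2 (x y : ℝ) : fx l2 x y = 4 * (x * (x ^ 2 - 1)) := by simp [fx, l2]; ring
lemma fy_l2 (x y : ℝ) : fy l2 x y = -4 * (y * (y ^ 2 - 1)) := by simp [fy, l2]; ring

lemma base_l2 : Base l2 := by
  refine Base.mk' (by simp [l2]) ?_ 1 (by norm_num) (fun x => ?_) (fun x y => ?_)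
    (fun M hM z hz => ?_)
  · rintro x y ⟨h0, h1, h2⟩
    rw [f_l2] at h0
    rw [fx_l2] at h1
    rw [fy_l2] at h2
    have h3 : x = 0 ∨ x ^ 2 - 1 = 0 := by simpa using h1
    have h4 : y = 0 ∨ y ^ 2 - 1 = 0 := by simpa using h2
    rcases h3 with h3 | h3 <;> rcases h4 with h4 | h4 <;> rw [h3, h4] at h0 <;> norm_num at h0
  · rw [f_l2]
    have : 0 ≤ (x ^ 2 - 1) ^ 2 := by positivity
    linarith
  · simp only [f_l2]; ring
  · rw [f_l2]
    obtain ⟨b1, -, -, b2⟩ := big_bounds hM hz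
    nlinarith [sq_nonneg z]

lemma count_l2 {M : ℝ} (hM : 10 ≤ M) : Count M (f l2) 2 := by
  refine ⟨![(1, 0), (-1, 0)], reps_of
    ![fun p => min p.1 (1 - |p.2|), fun p => min (-p.1) (1 - |p.2|)]
    ?_ ?_ ?_ ?_ ?_ ?_ fun p hp => ?_⟩
  · intro i; fin_cases i
    · show Continuous fun p : ℝ × ℝ => min p.1 (1 - |p.2|)
      fun_prop
    · show Continuous fun p : ℝ × ℝ => min (-p.1) (1 - |p.2|)
      fun_prop
  · intro i
    fin_cases i <;> refine ⟨by simp; linarith, by norm_num [f_l2]⟩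
  · have key : ∀ z ∈ neg M (f l2), ∀ u : ℝ, u ^ 2 = z.1 ^ 2 → min u (1 - |z.2|) ≠ 0 := by
      intro z hz u hu h0
      have h := hz.2
      rw [f_l2] at h
      rcases min_choice u (1 - |z.2|) with h1 | h1
      · have h2 : |z.2| ≤ 1 := by
          have := min_le_right u (1 - |z.2|)
          linarith
        have h3 : z.2 ^ 2 ≤ 1 := by rw [← sq_abs]; nlinarith [abs_nonneg z.2]
        have h4 : z.1 ^ 2 = 0 := by rw [← hu, ← h1, h0]; norm_num
        rw [h4] at h
        nlinarith [sq_nonneg z.2]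
      · have h2 : |z.2| = 1 := by linarith
        have h3 : z.2 ^ 2 = 1 := by rw [← sq_abs, h2]; norm_num
        rw [h3] at h
        nlinarith [sq_nonneg (z.1 ^ 2 - 1)]
    intro i z hz
    fin_cases i
    · exact key z hz z.1 rfl
    · exact key z hz (-z.1) (by ring)
  · intro i; fin_cases i <;> simp
  · intro i j hij
    fin_cases i <;> fin_cases j <;> simp at hij ⊢
  · intro i q hq
    have : 1 - |q.2| ≤ 0 := by rw [hq]; linarith
    fin_cases i <;> exact (min_le_right _ _).trans this
  · obtain ⟨x, y⟩ := p
    have h := hp.2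
    simp only [f_l2] at h
    have main : ∀ s : ℝ, s ^ 2 = 1 → 0 ≤ x * s →
        (∃ q : ℝ × ℝ, |q.2| = M ∧ JoinedIn (neg M (f l2)) (x, y) q) ∨
        JoinedIn (neg M (f l2)) (x, y) (s, 0) := by
      intro s hs hxs
      have j : JoinedIn (neg M (f l2)) (x, y) (s, y) := joined_x fun z hz => ⟨hp.1, by
        simp only [f_l2]
        have := sq_sub_sq_le hs hxs hz
        linarith⟩
      rcases vert_move (c := 1 / 2) hM (fun z => by rw [f_l2, hs]; ring) j.target_mem
        with h' | h'
      · exact Or.inl (edge_trans j h')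
      · exact Or.inr (j.trans h')
    rcases le_total 0 x with hx | hx
    · exact (main 1 (by norm_num) (by simpa)).imp_right fun h => ⟨0, h⟩
    · exact (main (-1) (by norm_num) (by simpa)).imp_right fun h => ⟨1, h⟩

/-! ### A sample whose bounded component lies beside the positive region -/

/-- A quartic with critical points `-3`, `1`, `2`. -/
noncomputable def K (y : ℝ) : ℝ := y ^ 4 - 14 * y ^ 2 + 24 * y - 15 / 2

lemma hasDerivAt_K (y : ℝ) : HasDerivAt K (4 * ((y + 3) * (y - 1) * (y - 2))) y := by
  have h := ((((hasDerivAt_id y).pow 4).sub (((hasDerivAt_id y).pow 2).const_mul 14)).add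
    ((hasDerivAt_id y).const_mul 24)).sub_const (15 / 2)
  refine HasDerivAt.congr_deriv h ?_
  simp
  ring

lemma K_mono {a b : ℝ} (h : ∀ y, a < y → y < b → 0 ≤ (y + 3) * (y - 1) * (y - 2)) (hab : a ≤ b) :
    K a ≤ K b := by
  refine monotoneOn_of_deriv_nonneg (convex_Icc a b)
    (fun y _ => (hasDerivAt_K y).continuousAt.continuousWithinAt)
    (fun y _ => (hasDerivAt_K y).differentiableAt.differentiableWithinAt) (fun y hy => ?_)
    (left_mem_Icc.2 hab) (right_mem_Icc.2 hab) hab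
  rw [interior_Icc] at hy
  rw [(hasDerivAt_K y).deriv]
  linarith [h y hy.1 hy.2]

lemma K_anti {a b : ℝ} (h : ∀ y, a < y → y < b → (y + 3) * (y - 1) * (y - 2) ≤ 0) (hab : a ≤ b) :
    K b ≤ K a := by
  refine antitoneOn_of_deriv_nonpos (convex_Icc a b)
    (fun y _ => (hasDerivAt_K y).continuousAt.continuousWithinAt)
    (fun y _ => (hasDerivAt_K y).differentiableAt.differentiableWithinAt) (fun y hy => ?_)
    (left_mem_Icc.2 hab) (right_mem_Icc.2 hab) hab
  rw [interior_Icc] at hy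
  rw [(hasDerivAt_K y).deriv]
  linarith [h y hy.1 hy.2]

lemma K_mono_mid {a b : ℝ} (ha : -3 ≤ a) (hab : a ≤ b) (hb : b ≤ 1) : K a ≤ K b :=
  K_mono (fun y h1 h2 => mul_nonneg_of_nonpos_of_nonpos
    (mul_nonpos_of_nonneg_of_nonpos (by linarith) (by linarith)) (by linarith)) hab

lemma K_mono_right {a b : ℝ} (ha : 2 ≤ a) (hab : a ≤ b) : K a ≤ K b :=
  K_mono (fun y h1 h2 => mul_nonneg (mul_nonneg (by linarith) (by linarith)) (by linarith)) hab

lemma K_anti_mid {a b : ℝ} (ha : 1 ≤ a) (hab : a ≤ b) (hb : b ≤ 2) : K b ≤ K a :=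
  K_anti (fun y h1 h2 => mul_nonpos_of_nonneg_of_nonpos
    (mul_nonneg (by linarith) (by linarith)) (by linarith)) hab

lemma K_anti_left {a b : ℝ} (hab : a ≤ b) (hb : b ≤ -3) : K b ≤ K a :=
  K_anti (fun y h1 h2 => mul_nonpos_of_nonneg_of_nonpos
    (mul_nonneg_of_nonpos_of_nonpos (by linarith) (by linarith)) (by linarith)) hab

lemma K_pos {z : ℝ} (hz : 1 ≤ z) : 0 < K z := by
  have : K z = (z - 2) ^ 2 * (z ^ 2 + 4 * z - 2) + 1 / 2 := by unfold K; ring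
  rw [this]
  have h1 : 0 ≤ z ^ 2 + 4 * z - 2 := by nlinarith
  positivity

/-- `(x² - 1)² - K y` -/
noncomputable def l4 : Par := !₂[17 / 2, 0, -24, -2, 0, 14, 0, 0, 0]

lemma f_l4 (x y : ℝ) : f l4 x y = (x ^ 2 - 1) ^ 2 - K y := by simp [f, l4, K]; ring
lemma fx_l4 (x y : ℝ) : fx l4 x y = 4 * (x * (x ^ 2 - 1)) := by simp [fx, l4]; ring
lemma fy_l4 (x y : ℝ) : fy l4 x y = -4 * ((y + 3) * (y - 1) * (y - 2)) := by
  simp [fy, l4]; ring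

lemma base_l4 : Base l4 := by
  refine Base.mk' (by simp [l4]) ?_ (-3) (by norm_num) (fun x => ?_) (fun x y => ?_)
    (fun M hM z hz => ?_)
  · rintro x y ⟨h0, h1, h2⟩
    rw [f_l4] at h0
    rw [fx_l4] at h1
    rw [fy_l4] at h2
    have h3 : x = 0 ∨ x ^ 2 - 1 = 0 := by simpa using h1
    have h4 : y = -3 ∨ y = 1 ∨ y = 2 := by
      simpa [sub_eq_zero, add_eq_zero_iff_eq_neg, or_assoc] using h2
    rcases h3 with h3 | h3 <;> rcases h4 with h4 | h4 | h4 <;> rw [h3, h4] at h0 <;>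
      norm_num [K] at h0
  · rw [f_l4]
    have : 0 ≤ (x ^ 2 - 1) ^ 2 := by positivity
    norm_num [K]
    linarith
  · simp only [f_l4]; ring
  · rw [f_l4]
    obtain ⟨b1, b3, b4, b2⟩ := big_bounds hM hz
    unfold K
    nlinarith [sq_nonneg z]

lemma count_l4 {M : ℝ} (hM : 10 ≤ M) : Count M (f l4) 0 := by
  refine ⟨Fin.elim0, reps_of Fin.elim0 (fun i => i.elim0) (fun i => i.elim0) (fun i => i.elim0)
    (fun i => i.elim0) (fun i => i.elim0) (fun i => i.elim0) fun p hp => Or.inl ?_⟩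
  obtain ⟨x, y⟩ := p
  have h := hp.2
  simp only [f_l4] at h
  have hs : ∃ s : ℝ, s ^ 2 = 1 ∧ 0 ≤ x * s := by
    rcases le_total 0 x with hx | hx
    · exact ⟨1, by norm_num, by simpa⟩
    · exact ⟨-1, by norm_num, by simpa⟩
  obtain ⟨s, hs, hxs⟩ := hs
  have j : JoinedIn (neg M (f l4)) (x, y) (s, y) := joined_x fun z hz => ⟨hp.1, by
    simp only [f_l4]
    have := sq_sub_sq_le hs hxs hz
    linarith⟩
  have hK : 0 < K y := by nlinarith [sq_nonneg (x ^ 2 - 1)]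
  refine edge_trans j ?_
  rcases le_total (-3) y with hy | hy
  · refine joined_up (by linarith) j.target_mem fun z hz => ?_
    rw [f_l4, hs]
    have : 0 < K z := by
      rcases le_total 1 z with h1 | h1
      · exact K_pos h1
      · exact hK.trans_le (K_mono_mid hy hz h1)
    linarith
  · refine joined_down (by linarith) j.target_mem fun z hz => ?_
    rw [f_l4, hs]
    have := K_anti_left hz hy
    linarith

lemma dual_mem {M u v : ℝ} (hv : |v| ≤ M) (h : K u < (v ^ 2 - 1) ^ 2) :
    (u, v) ∈ neg M (f (sig l4)) :=
  ⟨hv, by simp only [f_sig, f_l4]; linarith⟩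

/-- The point `(-3, 0)` lies in the unbounded component of the dual picture. -/
lemma dual_l4_pole {M : ℝ} (hM : 10 ≤ M) : JoinedIn (neg M (f (sig l4))) (0, M) (-3, 0) := by
  have hm : |M| ≤ M := (abs_of_nonneg (by linarith)).le
  have j1 : JoinedIn (neg M (f (sig l4))) (0, M) (-3, M) := joined_x fun z hz =>
    dual_mem hm (by
      rw [uIcc_of_ge (by norm_num)] at hz
      have h1 : K z ≤ K 1 := K_mono_mid hz.1 (by linarith [hz.2]) le_rfl
      have h2 : K 1 = 7 / 2 := by norm_num [K]
      have h3 : 100 ≤ M ^ 2 := by nlinarith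
      nlinarith)
  have j2 : JoinedIn (neg M (f (sig l4))) (-3, M) (-3, 0) := joined_y fun z hz =>
    dual_mem (by
      rw [uIcc_of_ge (by linarith)] at hz
      rw [abs_of_nonneg hz.1]
      exact hz.2) (by
      have h2 : K (-3) = -249 / 2 := by norm_num [K]
      nlinarith [sq_nonneg (z ^ 2 - 1)])
  exact j1.trans j2

lemma dual_l4_reps {M : ℝ} (hM : 10 ≤ M) : Reps M (f (sig l4)) (fun _ : Fin 1 => (2, 0)) := by
  have k1 : K 1 = 7 / 2 := by norm_num [K]
  have k2 : K 2 = 1 / 2 := by norm_num [K]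
  have k3 : K 3 = 39 / 2 := by norm_num [K]
  have km : K (-3) = -249 / 2 := by norm_num [K]
  refine reps_of (fun _ p => min (1 - |p.2|) (1 - |p.1 - 2|)) (fun _ => by fun_prop)
    (fun _ => dual_mem (by rw [abs_zero]; linarith) (by rw [k2]; norm_num))
    (fun _ z hz h0 => ?_) (fun _ => by simp)
    (fun i j hij => absurd (Subsingleton.elim i j) hij)
    (fun _ q hq => (min_le_left _ _).trans (by rw [hq]; linarith)) fun p hp => ?_
  · have h := hz.2
    rw [f_sig, f_l4] at h
    have m1 := min_le_left (1 - |z.2|) (1 - |z.1 - 2|)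
    have m2 := min_le_right (1 - |z.2|) (1 - |z.1 - 2|)
    have a1 : |z.2| ≤ 1 := by linarith
    have a2 : |z.1 - 2| ≤ 1 := by linarith
    have b2 := abs_le.1 a2
    have a3 : z.2 ^ 2 ≤ 1 := by rw [← sq_abs]; nlinarith [abs_nonneg z.2]
    rcases min_choice (1 - |z.2|) (1 - |z.1 - 2|) with h1 | h1
    · have h2 : z.2 ^ 2 = 1 := by rw [← sq_abs, show |z.2| = 1 by linarith]; norm_num
      rw [h2] at h
      have := K_pos (z := z.1) (by linarith)
      linarith
    · have h2 : |z.1 - 2| = 1 := by linarith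
      rcases eq_or_eq_neg_of_abs_eq h2 with h3 | h3
      · rw [show z.1 = 3 by linarith, k3] at h
        nlinarith [sq_nonneg z.2]
      · rw [show z.1 = 1 by linarith, k1] at h
        nlinarith [sq_nonneg z.2]
  · obtain ⟨u, v⟩ := p
    have h := hp.2
    simp only [f_sig, f_l4] at h
    rcases le_total 1 (v ^ 2) with hv | hv
    · left
      rcases le_total 0 v with hv0 | hv0
      · refine joined_up (by linarith) hp fun z hz => ?_
        rw [f_sig, f_l4]
        have : v ^ 2 ≤ z ^ 2 := by gcongr
        nlinarith
      · refine joined_down (by linarith) hp fun z hz => ?_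
        rw [f_sig, f_l4]
        have : v ^ 2 ≤ z ^ 2 := by nlinarith
        nlinarith
    · have j : JoinedIn (neg M (f (sig l4))) (u, v) (u, 0) := joined_y fun z hz => by
        have hz2 := sq_le_of_mem hz
        refine dual_mem ?_ (by nlinarith)
        have := abs_le_one_iff_mul_self_le_one.2 (by nlinarith : z * z ≤ 1)
        linarith
      have hK : K u < 1 := by nlinarith [sq_nonneg v]
      have jx : ∀ w, (∀ z ∈ uIcc u w, K z ≤ K u) →
          JoinedIn (neg M (f (sig l4))) (u, v) (w, 0) := fun w hw =>
        j.trans (joined_x fun z hz => dual_mem (by rw [abs_zero]; linarith)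
          (by have := hw z hz; norm_num; linarith))
      rcases le_total u 1 with hu | hu
      · left
        refine ⟨(0, M), abs_of_nonneg (by linarith), (jx (-3) fun z hz => ?_).trans
          (dual_l4_pole hM).symm⟩
        rcases le_total (-3) u with h3 | h3
        · rw [uIcc_of_ge h3] at hz
          exact K_mono_mid hz.1 hz.2 hu
        · rw [uIcc_of_le h3] at hz
          exact K_anti_left hz.1 hz.2
      · right
        refine ⟨0, jx 2 fun z hz => ?_⟩
        rcases le_total u 2 with h2 | h2
        · rw [uIcc_of_le h2] at hz
          exact K_anti_mid hu hz.1 hz.2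
        · rw [uIcc_of_ge h2] at hz
          exact K_mono_right hz.1 hz.2

lemma dual_l4 {M : ℝ} (hM : 10 ≤ M) : Count M (f (sig l4)) 1 := ⟨_, dual_l4_reps hM⟩

lemma east_l4 {M : ℝ} (hM : 10 ≤ M) : East 1 M (f (sig l4)) :=
  ⟨(2, 0), (dual_l4_reps hM).1 0, (-3, 0), dual_l4_pole hM, rfl, by norm_num⟩

/-! ### A sample with three bounded components -/

/-- `(x² - 2y - 5/4)² - (y² - 1/4)² + 1/100`: the parabola `x² = 2y + 5/4` meets the two lines
`y = ±1/2` in four points, and passes through three bounded components. -/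
noncomputable def l3 : Par := !₂[151 / 100, 0, 5, -5 / 2, 0, 9 / 2, -4, 0, 0]

lemma f_l3 (x y : ℝ) :
    f l3 x y = (x ^ 2 - (2 * y + 5 / 4)) ^ 2 - (y ^ 2 - 1 / 4) ^ 2 + 1 / 100 := by
  simp [f, l3]; ring
lemma fx_l3 (x y : ℝ) : fx l3 x y = 4 * (x * (x ^ 2 - (2 * y + 5 / 4))) := by
  simp [fx, l3]; ring
lemma fy_l3 (x y : ℝ) :
    fy l3 x y = -4 * (x ^ 2 - (2 * y + 5 / 4)) - 4 * (y * (y ^ 2 - 1 / 4)) := by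
  simp [fy, l3]; ring

lemma base_l3 : Base l3 := by
  refine Base.mk' (by simp [l3]) ?_ (-1) (by norm_num) (fun x => ?_) (fun x y => ?_)
    (fun M hM z hz => ?_)
  · rintro x y ⟨h0, h1, h2⟩
    rw [f_l3] at h0
    rw [fx_l3] at h1
    rw [fy_l3] at h2
    have h3 : x = 0 ∨ x ^ 2 - (2 * y + 5 / 4) = 0 := by simpa using h1
    rcases h3 with h3 | h3
    · subst h3
      have h4 : (y + 1) * (y ^ 2 - y - 5 / 4) = 0 := by linarith
      rcases mul_eq_zero.1 h4 with h5 | h5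
      · rw [show y = -1 by linarith] at h0
        norm_num at h0
      · have h6 : 6 * y + 15 / 4 + 9 / 16 + 1 / 100 = 0 := by
          linear_combination h0 + (y ^ 2 + y + 3 / 4 - 3) * h5
        rw [show y = -(15 / 4 + 9 / 16 + 1 / 100) / 6 by linarith] at h5
        norm_num at h5
    · rw [h3] at h0 h2
      have h4 : y = 0 ∨ y ^ 2 - 1 / 4 = 0 := by
        have : y * (y ^ 2 - 1 / 4) = 0 := by linarith
        exact mul_eq_zero.1 this
      rcases h4 with h4 | h4 <;> rw [h4] at h0 <;> norm_num at h0
  · rw [f_l3]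
    nlinarith [sq_nonneg x, sq_nonneg (x ^ 2)]
  · simp only [f_l3]; ring
  · rw [f_l3]
    obtain ⟨b1, b3, b4, b2⟩ := big_bounds hM hz
    nlinarith [sq_nonneg z]

/-- Points of the parabola stay in the negative region away from `y = ±1/2`. -/
lemma parabola_mem {M s z : ℝ} (hs : s ^ 2 = 1) (hz : -5 / 8 ≤ z) (hM : |z| ≤ M)
    (h : 1 / 100 < (z ^ 2 - 1 / 4) ^ 2) : (s * √(2 * z + 5 / 4), z) ∈ neg M (f l3) := by
  refine ⟨hM, ?_⟩
  simp only [f_l3]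
  rw [mul_pow, Real.sq_sqrt (by linarith), hs]
  linarith

/-- Motion from a point above the vertex of the parabola to the parabola, and then along it. -/
lemma parabola_move {M s x y w : ℝ} (hp : (x, y) ∈ neg M (f l3)) (hs : s ^ 2 = 1)
    (hxs : 0 ≤ x * s) (hy : -5 / 8 ≤ y) (hw : -5 / 8 ≤ w) (hwM : |w| ≤ M)
    (h : ∀ z ∈ uIcc y w, (y ^ 2 - 1 / 4) ^ 2 ≤ (z ^ 2 - 1 / 4) ^ 2) :
    JoinedIn (neg M (f l3)) (x, y) (s * √(2 * w + 5 / 4), w) := by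
  have h0 := hp.2
  simp only [f_l3] at h0
  have hm : (s * √(2 * y + 5 / 4)) ^ 2 = 2 * y + 5 / 4 := by
    rw [mul_pow, Real.sq_sqrt (by linarith), hs, one_mul]
  have j : JoinedIn (neg M (f l3)) (x, y) (s * √(2 * y + 5 / 4), y) :=
    joined_x fun z hz => ⟨hp.1, by
      simp only [f_l3]
      have := sq_sub_sq_le hm (by
        rw [← mul_assoc]; exact mul_nonneg hxs (Real.sqrt_nonneg _)) hz
      linarith⟩
  refine j.trans (joined_curve (γ := fun z => (s * √(2 * z + 5 / 4), z)) (by fun_prop)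
    fun z hz => ?_)
  have hz' := hz
  rw [← segment_eq_uIcc] at hz'
  refine parabola_mem hs ((convex_Ici (-5 / 8 : ℝ)).segment_subset hy hw hz')
    (abs_le.2 ((convex_Icc (-M) M).segment_subset (abs_le.1 hp.1) (abs_le.1 hwM) hz')) ?_
  nlinarith [h z hz, sq_nonneg (x ^ 2 - (2 * y + 5 / 4))]

/-- Below the vertex of the parabola one can move to the axis `x = 0`. -/
lemma axis_move {M x y : ℝ} (hp : (x, y) ∈ neg M (f l3)) (hy : y ≤ -5 / 8) :
    JoinedIn (neg M (f l3)) (x, y) (0, y) := by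
  have h0 := hp.2
  simp only [f_l3] at h0
  refine joined_x fun z hz => ⟨hp.1, ?_⟩
  simp only [f_l3]
  have := sq_le_of_mem hz
  nlinarith [sq_nonneg z]

/-- On the axis `f l3` is, up to the constant `1/100`, a quartic with a double root at `y = -1`. -/
lemma f_l3_axis (y : ℝ) :
    f l3 0 y = 1 / 100 - (y + 1) ^ 2 * ((y + 1) ^ 2 - 4 * (y + 1) + 3 / 2) := by
  rw [f_l3]; ring

/-- Between `y = -1` and the vertex, the negative part of the axis is an interval reaching the
vertex. -/
lemma axis_neg {y z : ℝ} (hy : -1 ≤ y) (h : f l3 0 y < 0) (hyz : y ≤ z) (hz : z ≤ -5 / 8) :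
    f l3 0 z < 0 := by
  rw [f_l3_axis] at h ⊢
  set u := z + 1
  set v := y + 1
  have hv : 0 ≤ v := by simp only [v]; linarith
  have hvu : v ≤ u := by simp only [v, u]; linarith
  have hu : u ≤ 3 / 8 := by simp only [u]; linarith
  clear_value u v
  rcases le_total u (1 / 4) with h1 | h1
  · have key : v ^ 2 * (v ^ 2 - 4 * v + 3 / 2) ≤ u ^ 2 * (u ^ 2 - 4 * u + 3 / 2) := by
      have h2 : 0 ≤ (u + v) * (u ^ 2 + v ^ 2) - 4 * (u ^ 2 + u * v + v ^ 2) + 3 / 2 * (u + v) := by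
        have : 0 ≤ (u + v) * (u ^ 2 + v ^ 2) :=
          mul_nonneg (by linarith) (by positivity)
        nlinarith [sq_nonneg (u - v)]
      nlinarith [mul_nonneg (sub_nonneg.2 hvu) h2]
    linarith
  · rcases le_total u (3 / 10) with h2 | h2
    · have a : 1 / 16 ≤ u ^ 2 := by nlinarith
      have b : 39 / 100 ≤ u ^ 2 - 4 * u + 3 / 2 := by nlinarith
      nlinarith [mul_le_mul a b (by norm_num) (by positivity)]
    · have a : 9 / 100 ≤ u ^ 2 := by nlinarith
      have b : 9 / 64 ≤ u ^ 2 - 4 * u + 3 / 2 := by nlinarith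
      nlinarith [mul_le_mul a b (by norm_num) (by positivity)]

/-- Three functions whose positive sets separate the bounded components of `l3`. -/
noncomputable def sep3 : Fin 3 → ℝ × ℝ → ℝ :=
  ![fun p => min (-p.1) (1 / 2 - |p.2|), fun p => min (p.2 + 1) (-1 / 2 - p.2),
    fun p => min p.1 (1 / 2 - |p.2|)]

lemma sep3_ne {M : ℝ} (i : Fin 3) (z : ℝ × ℝ) (hz : z ∈ neg M (f l3)) : sep3 i z ≠ 0 := by
  have h := hz.2
  rw [f_l3] at h
  have half : z.2 ^ 2 ≠ 1 / 4 := fun h3 => by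
    rw [h3] at h
    nlinarith [sq_nonneg (z.1 ^ 2 - (2 * z.2 + 5 / 4))]
  have key : ∀ u : ℝ, u ^ 2 = z.1 ^ 2 → min u (1 / 2 - |z.2|) ≠ 0 := by
    intro u hu h0
    rcases min_choice u (1 / 2 - |z.2|) with h1 | h1
    · have h2 : |z.2| ≤ 1 / 2 := by
        have := min_le_right u (1 / 2 - |z.2|)
        linarith
      have h3 := abs_le.1 h2
      have h4 : z.1 ^ 2 = 0 := by rw [← hu, ← h1, h0]; norm_num
      rw [h4] at h
      have h5 : 0 ≤ (2 * z.2 + 5 / 4 - (1 / 4 - z.2 ^ 2)) * (2 * z.2 + 5 / 4 + (1 / 4 - z.2 ^ 2)) :=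
        mul_nonneg (by nlinarith) (by nlinarith)
      linarith
    · have h2 : |z.2| = 1 / 2 := by linarith
      exact half (by rw [← sq_abs, h2]; norm_num)
  fin_cases i
  · exact key (-z.1) (by ring)
  · show min (z.2 + 1) (-1 / 2 - z.2) ≠ 0
    intro h0
    rcases min_choice (z.2 + 1) (-1 / 2 - z.2) with h1 | h1
    · rw [show z.2 = -1 by linarith] at h
      nlinarith [sq_nonneg z.1, sq_nonneg (z.1 ^ 2)]
    · exact half (by rw [show z.2 = -1 / 2 by linarith]; norm_num)
  · exact key z.1 rfl

/-- One point in each of the three bounded components. -/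
noncomputable def r3 : Fin 3 → ℝ × ℝ := ![(-√(5 / 4), 0), (0, -5 / 8), (√(5 / 4), 0)]

lemma reps_l3 {M : ℝ} (hM : 10 ≤ M) : Reps M (f l3) r3 := by
  have hs : 0 < √(5 / 4 : ℝ) := by positivity
  have hsq : √(5 / 4 : ℝ) ^ 2 = 5 / 4 := Real.sq_sqrt (by norm_num)
  refine reps_of sep3 ?_ ?_ sep3_ne ?_ ?_ ?_ fun p hp => ?_
  · intro i; fin_cases i
    · show Continuous fun p : ℝ × ℝ => min (-p.1) (1 / 2 - |p.2|)
      fun_prop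
    · show Continuous fun p : ℝ × ℝ => min (p.2 + 1) (-1 / 2 - p.2)
      fun_prop
    · show Continuous fun p : ℝ × ℝ => min p.1 (1 / 2 - |p.2|)
      fun_prop
  · intro i
    fin_cases i
    · refine ⟨by simp [r3]; linarith, ?_⟩
      simp only [r3, f_l3, Matrix.cons_val, Fin.zero_eta, neg_sq, hsq]
      norm_num
    · refine ⟨abs_le.2 ⟨by simp [r3]; linarith, by simp [r3]; linarith⟩, by norm_num [r3, f_l3]⟩
    · refine ⟨by simp [r3]; linarith, ?_⟩
      simp only [r3, f_l3, Matrix.cons_val, Fin.reduceFinMk, hsq]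
      norm_num
  · intro i; fin_cases i
    · simp [sep3, r3]
    · norm_num [sep3, r3]
    · simp [sep3, r3]
  · intro i j hij
    fin_cases i <;> fin_cases j <;> simp [sep3, r3] at hij ⊢ <;> norm_num <;> positivity
  · intro i q hq
    have hq' : 1 / 2 - |q.2| ≤ 0 := by rw [hq]; linarith
    fin_cases i
    · exact (min_le_right _ _).trans hq'
    · show min (q.2 + 1) (-1 / 2 - q.2) ≤ 0
      rcases eq_or_eq_neg_of_abs_eq hq with h | h
      · exact (min_le_right _ _).trans (by linarith)
      · exact (min_le_left _ _).trans (by linarith)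
    · exact (min_le_right _ _).trans hq'
  · obtain ⟨x, y⟩ := p
    have h := hp.2
    simp only [f_l3] at h
    have hyM := abs_le.1 hp.1
    have hsign : ∃ s : ℝ, s ^ 2 = 1 ∧ 0 ≤ x * s ∧
        ∃ i, r3 i = (s * √(2 * 0 + 5 / 4), 0) := by
      rcases le_total 0 x with hx | hx
      · exact ⟨1, by norm_num, by simpa, 2, by simp [r3]⟩
      · exact ⟨-1, by norm_num, by simpa, 0, by simp [r3]⟩
    obtain ⟨s, hs1, hxs, i, hi⟩ := hsign
    rcases le_total (-5 / 8) y with hy | hy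
    · rcases le_total (1 / 2) y with hy1 | hy1
      · left
        refine ⟨_, ?_, parabola_move (w := M) hp hs1 hxs hy (by linarith)
          (abs_of_nonneg (by linarith)).le fun z hz => ?_⟩
        · exact abs_of_nonneg (by linarith)
        · rw [uIcc_of_le hyM.2] at hz
          have : y ^ 2 ≤ z ^ 2 := by nlinarith [hz.1]
          have h4 : 1 / 4 ≤ y ^ 2 := by nlinarith
          nlinarith
      · right
        rcases le_total (-1 / 2) y with hy2 | hy2
        · refine ⟨i, ?_⟩
          rw [hi]
          refine parabola_move hp hs1 hxs hy (by norm_num) (by rw [abs_zero]; linarith)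
            fun z hz => ?_
          have h1 := sq_le_of_mem hz
          have h2 : y ^ 2 ≤ 1 / 4 := by nlinarith
          nlinarith
        · refine ⟨1, ?_⟩
          have hj := parabola_move (w := -5 / 8) hp hs1 hxs hy le_rfl
            (abs_le.2 ⟨by linarith, by linarith⟩) fun z hz => by
              rw [uIcc_of_ge hy] at hz
              have : y ^ 2 ≤ z ^ 2 := by nlinarith [hz.2]
              have h4 : 1 / 4 ≤ y ^ 2 := by nlinarith
              nlinarith
          convert hj using 1
          norm_num [r3]
    · have j := axis_move hp hy
      have hj := j.target_mem.2
      simp only at hj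
      rcases le_total (-1) y with hy1 | hy1
      · right
        refine ⟨1, j.trans (joined_y fun z hz => ?_)⟩
        rw [uIcc_of_le hy] at hz
        exact ⟨abs_le.2 ⟨by simp only; linarith [hz.1], by simp only; linarith [hz.2]⟩,
          axis_neg hy1 hj hz.1 hz.2⟩
      · left
        refine edge_trans j (joined_down (by linarith) j.target_mem fun z hz => ?_)
        rw [f_l3_axis] at hj ⊢
        have a : (y + 1) ^ 2 ≤ (z + 1) ^ 2 := by nlinarith
        have b : (y + 1) ^ 2 - 4 * (y + 1) + 3 / 2 ≤ (z + 1) ^ 2 - 4 * (z + 1) + 3 / 2 := by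
          nlinarith
        have := mul_le_mul a b (by nlinarith) (by positivity)
        linarith

lemma turn_l3 {M : ℝ} (hM : 10 ≤ M) : Turn 1 M (f l3) := by
  have hs : 0 < √(5 / 4 : ℝ) := by positivity
  refine ⟨r3, reps_l3 hM, ?_, ?_, ?_⟩
  · simp [r3]
  · simp [r3]
  · simp only [orient, r3, Matrix.cons_val]
    linarith

/-! ### Seven kinds of chambers and their mirror images -/

/-- The invariants that tell seven chambers apart: the number of bounded negative components;
for three of them the orientation of the triangle which they span; for none of them the number of
bounded positive components, and on which side of the unbounded one they lie. -/
def Kind (i : Fin 7) (m : Par) : Prop :=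
  match i with
  | 0 => Count 2 (f m) 0 ∧ Count 2 (f (sig m)) 0
  | 1 => Count 2 (f m) 1
  | 2 => Count 2 (f m) 2
  | 3 => Turn 1 2 (f m)
  | 4 => Turn (-1) 2 (f m)
  | 5 => Count 2 (f m) 0 ∧ Count 2 (f (sig m)) 1 ∧ East 1 2 (f (sig m))
  | 6 => Count 2 (f m) 0 ∧ Count 2 (f (sig m)) 1 ∧ East (-1) 2 (f (sig m))

lemma Turn.count {κ R : ℝ} {G : ℝ → ℝ → ℝ} (h : Turn κ R G) : Count R G 3 := by
  obtain ⟨r, hr, -⟩ := h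
  exact ⟨r, hr⟩

/-- The number of bounded negative components of each kind. -/
def cnt : Fin 7 → ℕ := ![0, 1, 2, 3, 3, 0, 0]

lemma Kind.count {i : Fin 7} {m : Par} (h : Kind i m) : Count 2 (f m) (cnt i) := by
  fin_cases i
  · exact And.left h
  · exact h
  · exact h
  · exact Turn.count h
  · exact Turn.count h
  · exact And.left h
  · exact And.left h

lemma count_const {T : Set Par} (hT : IsPreconnected T) (hG : ∀ l ∈ T, Good l) {a b : Par}
    (ha : a ∈ T) (hb : b ∈ T) {k : ℕ} (h : Count 2 (f a) k) : Count 2 (f b) k :=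
  const_of_link hT hG (Q := fun l => Count 2 (f l) k)
    (fun _ _ _ _ _ h1 h2 hk => h1.count h2 hk) ha hb h

lemma through_const {T : Set Par} (hT : IsPreconnected T) (hG : ∀ l ∈ T, Good l) {a b : Par}
    (ha : a ∈ T) (hb : b ∈ T) (h : Through 2 (f a)) : Through 2 (f b) :=
  const_of_link hT hG (Q := fun l => Through 2 (f l))
    (fun _ _ _ _ hn h1 h2 hk => h1.through h2 hn.1 hk) ha hb h

lemma turn_const {T : Set Par} (hT : IsPreconnected T) (hG : ∀ l ∈ T, Good l) {a b : Par}
    (ha : a ∈ T) (hb : b ∈ T) {κ : ℝ} (h : Turn κ 2 (f a)) : Turn κ 2 (f b) :=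
  const_of_link hT hG (Q := fun l => Turn κ 2 (f l))
    (fun _ _ _ hm _ h1 h2 hk => h1.turn h2 hm.1 hk) ha hb h

lemma preconnected_sig {T : Set Par} (hT : IsPreconnected T) : IsPreconnected (sig '' T) :=
  hT.image sig continuous_sig.continuousOn

lemma good_sig {T : Set Par} (hG : ∀ l ∈ T, Good l) : ∀ l ∈ sig '' T, Good l := by
  rintro _ ⟨l, hl, rfl⟩
  exact (hG l hl).sig

lemma kind_lt {T : Set Par} (hT : IsPreconnected T) (hG : ∀ l ∈ T, Good l) {a b : Par}
    (ha : a ∈ T) (hb : b ∈ T) (hth : Through 2 (f (sig a))) {i j : Fin 7} (hij : i < j)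
    (hi : Kind i a) (hj : Kind j b) : False := by
  have hS := preconnected_sig hT
  have hGS := good_sig hG
  have ha' := mem_image_of_mem sig ha
  have hb' := mem_image_of_mem sig hb
  have hc := count_const hT hG ha hb hi.count
  have h1 : cnt i = cnt j := le_antisymm (hc.le hj.count) (hj.count.le hc)
  have h2 : (i = 3 ∧ j = 4) ∨ (i = 0 ∧ j = 5) ∨ (i = 0 ∧ j = 6) ∨ (i = 5 ∧ j = 6) := by
    clear hi hj hc
    revert i j
    decide
  have h01 : Count 2 (f (sig a)) 0 → Count 2 (f (sig b)) 1 → False := fun h0 h1 =>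
    absurd (h1.le (count_const hS hGS ha' hb' h0)) (by norm_num)
  rcases h2 with ⟨rfl, rfl⟩ | ⟨rfl, rfl⟩ | ⟨rfl, rfl⟩ | ⟨rfl, rfl⟩
  · exact turn_unique (hG b hb).1 (turn_const hT hG ha hb hi) hj
  · exact h01 (And.right hi) (And.left (And.right hj))
  · exact h01 (And.right hi) (And.left (And.right hj))
  · obtain ⟨-, hi1, hi2⟩ := hi
    obtain ⟨-, hj1, hj2⟩ := hj
    exact east_not (through_const hS hGS ha' hb' hth) hj1
      (east_const hS hGS (fun l hl => through_const hS hGS ha' hl hth)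
        (fun l hl => count_const hS hGS ha' hl hi1) ha' hb' hi2) hj2

/-- A parameter of kind `i` whose negative region does not connect top and bottom, so that its
positive region connects left and right. -/
structure Sample (d : ℝ) (i : Fin 7) (m : Par) : Prop where
  small : ‖m‖ < d
  good : Good m
  nthr : ¬ Through 2 (f m)
  thr : Through 2 (f (sig m))
  kind : Kind i m

lemma kind_unique {T : Set Par} (hT : IsPreconnected T) (hG : ∀ l ∈ T, Good l) {a b : Par}
    (ha : a ∈ T) (hb : b ∈ T) {d : ℝ} {i j : Fin 7} (hi : Sample d i a) (hj : Sample d j b) :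
    i = j := by
  rcases lt_trichotomy i j with h | h | h
  · exact (kind_lt hT hG ha hb hi.thr h hi.kind hj.kind).elim
  · exact h
  · exact (kind_lt hT hG hb ha hj.thr h hj.kind hi.kind).elim

/-- Scaling a sample function gives a sample with arbitrarily small parameters. -/
lemma Base.sample {l : Par} (hl : Base l) {k : ℝ} (hk : |k| = 1) {i : Fin 7}
    (hkind : ∀ t > 0, 10 ≤ 2 / t → Dil t (k * t) (2 / t) 2 (f l) (f (scl t k l)) →
      Dil (k * t) t (2 / t) 2 (f (sig l)) (f (sig (scl t k l))) → Kind i (scl t k l))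
    {d : ℝ} (hd : 0 < d) (hd1 : d ≤ 1 / 100) : ∃ m, Sample d i m := by
  obtain ⟨t, ht, ht5, hn⟩ := exists_scl hl.top k hd
  have hM : 10 ≤ 2 / t := by rw [le_div_iff₀ ht]; linarith
  have D := dil_scl l ht hk
  have D' := dil_scl_sig l ht hk
  exact ⟨scl t k l, hn, scl_good hl.smooth ht (by rw [← sq_abs, hk]; norm_num) (hn.trans_le hd1),
    fun h => hl.nthr _ hM (D.symm.through h), D'.through (hl.thr _ hM), hkind t ht hM D D'⟩

lemma exists_sample (i : Fin 7) {d : ℝ} (hd : 0 < d) (hd1 : d ≤ 1 / 100) : ∃ m, Sample d i m := by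
  have one : |(1 : ℝ)| = 1 := abs_one
  have mone : |(-1 : ℝ)| = 1 := by norm_num
  fin_cases i
  · exact base_l0.sample (i := 0) one (fun t ht hM D D' => ⟨D.count (count_l0 hM), D'.count (dual_l0 hM)⟩)
      hd hd1
  · exact base_l1.sample (i := 1) one (fun t ht hM D D' => D.count (count_l1 hM)) hd hd1
  · exact base_l2.sample (i := 2) one (fun t ht hM D D' => D.count (count_l2 hM)) hd hd1
  · exact base_l3.sample (i := 3) one (fun t ht hM D D' => D.turn (μ := 1) ht (by
      rw [one_mul t, abs_of_pos ht]) (turn_l3 hM)) hd hd1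
  · exact base_l3.sample (i := 4) mone (fun t ht hM D D' => D.turn (μ := -1) ht (by
      rw [neg_one_mul t, abs_neg, abs_of_pos ht]; ring) (turn_l3 hM)) hd hd1
  · exact base_l4.sample (i := 5) one (fun t ht hM D D' => ⟨D.count (count_l4 hM), D'.count (dual_l4 hM),
      D'.east ht (by rw [one_mul t, abs_of_pos ht]) (east_l4 hM)⟩) hd hd1
  · exact base_l4.sample (i := 6) mone (fun t ht hM D D' => ⟨D.count (count_l4 hM), D'.count (dual_l4 hM),
      D'.east ht (by rw [neg_one_mul t, abs_neg, abs_of_pos ht]; ring) (east_l4 hM)⟩) hd hd1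

/-- The sample `m i`, or its mirror image. -/
noncomputable def point (m : Fin 7 → Par) (c : Fin 7 × Fin 2) : Par :=
  if c.2 = 0 then m c.1 else sig (m c.1)

lemma point_inj {T : Set Par} (hT : IsPreconnected T) (hG : ∀ l ∈ T, Good l) {d : ℝ}
    {m : Fin 7 → Par} (hm : ∀ i, Sample d i (m i)) {b c : Fin 7 × Fin 2} (hb : point m b ∈ T)
    (hc : point m c ∈ T) : b = c := by
  obtain ⟨i, u⟩ := b
  obtain ⟨j, v⟩ := c
  simp only [point] at hb hc
  by_cases hu : u = 0 <;> by_cases hv : v = 0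
  · rw [if_pos hu] at hb
    rw [if_pos hv] at hc
    rw [kind_unique hT hG hb hc (hm i) (hm j), hu, hv]
  · rw [if_pos hu] at hb
    rw [if_neg hv] at hc
    exact absurd (through_const hT hG hc hb (hm j).thr) (hm i).nthr
  · rw [if_neg hu] at hb
    rw [if_pos hv] at hc
    exact absurd (through_const hT hG hb hc (hm i).thr) (hm j).nthr
  · rw [if_neg hu] at hb
    rw [if_neg hv] at hc
    have hb' := mem_image_of_mem sig hb
    have hc' := mem_image_of_mem sig hc
    rw [sig_sig] at hb' hc'
    rw [kind_unique (preconnected_sig hT) (good_sig hG) hb' hc' (hm i) (hm j), show u = v by omega]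

end X91

/-- The complement of the local discriminant of the `X₉¹` singularity has at least 14
connected components. -/
theorem X91_discriminant_complement_components :
    ∃ ε₀ : ℝ, 0 < ε₀ ∧ ∀ ε : ℝ, 0 < ε → ε ≤ ε₀ → ∃ δ : ℝ, 0 < δ ∧
      ∃ pts : Fin 14 → EuclideanSpace ℝ (Fin 9),
        (∀ i, pts i ∈ ({l : EuclideanSpace ℝ (Fin 9) | ‖l‖ < δ} \ X91Disc ε δ)) ∧
        Function.Injective (fun i =>
          connectedComponentIn ({l : EuclideanSpace ℝ (Fin 9) | ‖l‖ < δ} \ X91Disc ε δ)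
            (pts i)) := by
  refine ⟨1, one_pos, fun ε hε hε1 => ⟨ε ^ 3 / 100, by positivity, ?_⟩⟩
  have hd1 : ε ^ 3 / 100 ≤ 1 / 100 := by
    have := pow_le_one₀ (n := 3) hε.le hε1
    linarith
  choose m hm using fun i => X91.exists_sample i (d := ε ^ 3 / 100) (by positivity) hd1
  have hmem : ∀ c, X91.point m c ∈
      ({l : EuclideanSpace ℝ (Fin 9) | ‖l‖ < ε ^ 3 / 100} \ X91Disc ε (ε ^ 3 / 100)) := by
    intro c
    unfold X91.point
    split_ifs
    · exact ⟨(hm c.1).small, X91.not_disc_of_good (hm c.1).good⟩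
    · exact ⟨(X91.norm_sig _).trans_lt (hm c.1).small,
        X91.not_disc_of_good (hm c.1).good.sig⟩
  refine ⟨fun i => X91.point m ((finProdFinEquiv (m := 7) (n := 2)).symm i), fun i => hmem _,
    fun i j hij => (finProdFinEquiv (m := 7) (n := 2)).symm.injective ?_⟩
  refine X91.point_inj isPreconnected_connectedComponentIn (fun l hl => ?_) hm
    (mem_connectedComponentIn (hmem _)) ?_
  · have h := connectedComponentIn_subset _ _ hl
    exact X91.good_of_not_disc hε hε1 le_rfl h.1 h.2
  · simp only at hij
    rw [hij]
    exact mem_connectedComponentIn (hmem _)
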